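/- arXiv:2206.13931 — 2 statements merged into one kernel-verified Lean document; each statement's English description precedes it below -/
import Mathlib

section
/- Let t₀ ∈ {0, 4, 5} and t ≥ 1 be integers, and set T = t₀ + 9t. Suppose T² + 4 = M·r² with M ≥ 2 squarefree and r ≥ 1 (when t₀ = 0 one may instead suppose T² − 4 = M·r²), and let E = (T + r√M)/2, a unit of the ring of integers O_K of K = ℚ(√M). If E is not the cube of a unit of O_K, then 3 divides the class number of the imaginary quadratic field ℚ(√(−3M)). -/
open NumberField Module Polynomial

/-- Descent of ideals along an automorphism `s` of order three whose differences `x - s x`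
generate the unit ideal: every `s`-stable ideal is extended from the fixed ring. -/
theorem Ideal.map_comap_eq_of_span_sub_eq_top {A B : Type*} [CommRing A] [CommRing B]
    [Algebra A B] (s : B ≃ₐ[A] B) (hs : ∀ x, s (s (s x)) = x)
    (hfix : ∀ x, s x = x → ∃ a, algebraMap A B a = x)
    (htop : Ideal.span (Set.range fun x ↦ x - s x) = ⊤)
    (J : Ideal B) (hJ : ∀ z ∈ J, s z ∈ J) :
    (J.comap (algebraMap A B)).map (algebraMap A B) = J := by
  refine le_antisymm Ideal.map_comap_le fun z hz ↦ ?_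
  set J' := (J.comap (algebraMap A B)).map (algebraMap A B)
  have htr : ∀ z ∈ J, z + s z + s (s z) ∈ J' := by
    intro z hz
    obtain ⟨a, ha⟩ := hfix (z + s z + s (s z)) (by simp only [map_add, hs]; ring)
    rw [← ha]
    refine Ideal.mem_map_of_mem _ ?_
    rw [Ideal.mem_comap, ha]
    exact J.add_mem (J.add_mem hz (hJ _ hz)) (hJ _ (hJ _ hz))
  have hone : ∀ v, ∀ z ∈ J, (v - s v) * z + (s (s v) - s v) * s (s z) ∈ J' := by
    intro v z hz
    have := J'.sub_mem (htr (v * z) (J.mul_mem_left v hz)) (J'.mul_mem_left (s v) (htr z hz))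
    simp only [map_mul] at this
    convert this using 1
    ring
  have htwo : ∀ v y, (v - s v) * ((y - s (s y)) * z) ∈ J' := by
    intro v y
    have := J'.sub_mem (hone v (y * z) (J.mul_mem_left y hz))
      (J'.mul_mem_left (s (s y)) (hone v z hz))
    simp only [map_mul] at this
    convert this using 1
    ring
  have key : ∀ x, (∀ v, (v - s v) * x ∈ J') → x ∈ J' := by
    intro x hx
    have hle : Ideal.span (Set.range fun v ↦ v - s v) ≤
        Submodule.comap (LinearMap.mulRight B x) J' := by
      rw [Ideal.span_le]
      rintro _ ⟨v, rfl⟩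
      exact hx v
    have h1 : (1 : B) ∈ Ideal.span (Set.range fun v ↦ v - s v) := htop ▸ Submodule.mem_top
    simpa using hle h1
  refine key z fun v ↦ ?_
  have := J'.neg_mem (key _ fun w ↦ htwo w (s v))
  rw [hs] at this
  convert this using 1
  ring

/-- If the unit rank is positive and `3 ∤ k`, not every `k`-th power of a unit is a cube. -/
theorem NumberField.Units.not_forall_pow_eq_pow_three {L : Type*} [Field L] [NumberField L]
    (hdeg : 3 ≤ finrank ℚ L) {k : ℕ} (hk : ¬ 3 ∣ k) :
    ¬ ∀ η : (𝓞 L)ˣ, ∃ w : (𝓞 L)ˣ, η ^ k = w ^ 3 := by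
  classical
  intro h
  have hrank : 0 < Units.rank L := by
    have h1 := InfinitePlace.card_add_two_mul_card_eq_rank L
    have h2 := InfinitePlace.card_eq_nrRealPlaces_add_nrComplexPlaces L
    rw [Units.rank]
    omega
  let i : Fin (Units.rank L) := ⟨0, hrank⟩
  obtain ⟨w, hw⟩ := h (Units.fundSystem L i)
  let y : Units.unitLattice L :=
    ⟨Units.logEmbedding L (Additive.ofMul w), Submodule.mem_map_of_mem trivial⟩
  have h1 : (k : ℤ) • Units.basisUnitLattice L i = (3 : ℤ) • y := by
    apply Subtype.ext
    have := congrArg (fun x ↦ Units.logEmbedding L (Additive.ofMul x)) hw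
    simp only [ofMul_pow, map_nsmul, Units.logEmbedding_fundSystem] at this
    rw [natCast_zsmul, ofNat_zsmul]
    exact this
  have h2 := congrArg (fun x ↦ (Units.basisUnitLattice L).repr x i) h1
  simp only [map_smul, Finsupp.smul_apply, Basis.repr_self, Finsupp.single_eq_same,
    smul_eq_mul, mul_one] at h2
  exact hk (by exact_mod_cast Dvd.intro _ h2.symm)

/-- A form of Hilbert's Theorem 94 in degree three: if `L / F` is an unramified cyclic cubic
extension and all units of `F` are roots of unity of order prime to `3`, then some ideal of `F`
becomes principal in `L` without being principal, so that `3` divides the class number of `F`.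
Unramifiedness is expressed by the differences `x - σ x` generating the unit ideal. -/
theorem NumberField.three_dvd_classNumber_of_span_sub_eq_top {F L : Type} [Field F]
    [NumberField F] [Field L] [NumberField L] [Algebra F L] [IsGalois F L]
    (hdeg : finrank F L = 3) (σ : Gal(L/F)) (hσ : σ ≠ 1)
    (htop : Ideal.span (Set.range fun x ↦ x - galRestrict (𝓞 F) F L (𝓞 L) σ x) = ⊤)
    {m : ℕ} (hm : ¬ 3 ∣ m) (hu : ∀ u : (𝓞 F)ˣ, u ^ m = 1) :
    3 ∣ classNumber F := by
  classical
  have hcard : Nat.card Gal(L/F) = 3 := by rw [IsGalois.card_aut_eq_finrank, hdeg]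
  have : Fact (Nat.Prime 3) := ⟨Nat.prime_three⟩
  have hcyc : IsCyclic Gal(L/F) := isCyclic_of_prime_card hcard
  have hgen : ∀ x, x ∈ Subgroup.zpowers σ := fun x ↦ mem_zpowers_of_prime_card hcard hσ
  have hord : orderOf σ = 3 := by
    rw [orderOf_eq_card_of_forall_mem_zpowers hgen, hcard]
  have hσ3 : ∀ x, σ (σ (σ x)) = x := by
    intro x
    have : σ ^ 3 = 1 := by rw [← hord, pow_orderOf_eq_one]
    exact DFunLike.congr_fun this x
  have hfixL : ∀ x, σ x = x → ∃ a, algebraMap F L a = x := by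
    intro x hx
    refine (IsGalois.mem_range_algebraMap_iff_fixed x).2 fun f ↦ ?_
    obtain ⟨k, rfl⟩ := hgen f
    have : σ ∈ MulAction.stabilizer Gal(L/F) x := hx
    exact zpow_mem this k
  have hnormL : ∀ x : L, algebraMap F L (Algebra.norm F x) = x * σ x * σ (σ x) := by
    intro x
    rw [Algebra.norm_eq_prod_automorphisms]
    have hinj : Function.Injective fun i : Fin 3 ↦ σ ^ (i : ℕ) := by
      intro i j hij
      exact Fin.ext (pow_injOn_Iio_orderOf (by simp [hord]) (by simp [hord]) hij)
    have hbij : Function.Bijective fun i : Fin 3 ↦ σ ^ (i : ℕ) := by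
      rw [Fintype.bijective_iff_injective_and_card]
      exact ⟨hinj, by simpa using hcard.symm⟩
    rw [← hbij.prod_comp fun f : Gal(L/F) ↦ f x, Fin.prod_univ_three]
    simp [pow_two]
  set s := galRestrict (𝓞 F) F L (𝓞 L) σ with hs_def
  have hscoe : ∀ x : 𝓞 L, algebraMap (𝓞 L) L (s x) = σ (algebraMap (𝓞 L) L x) := fun x ↦
    algebraMap_galRestrict_apply (𝓞 F) σ x
  have hs3 : ∀ x, s (s (s x)) = x := by
    intro x
    apply RingOfIntegers.coe_injective
    simp only [hscoe, hσ3]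
  have hfix : ∀ x, s x = x → ∃ a, algebraMap (𝓞 F) (𝓞 L) a = x := by
    intro x hx
    obtain ⟨a, ha⟩ := hfixL (algebraMap (𝓞 L) L x) (by rw [← hscoe, hx])
    have hint : IsIntegral ℤ a := by
      rw [← isIntegral_algebraMap_iff (algebraMap F L).injective, ha]
      exact RingOfIntegers.isIntegral_coe x
    exact ⟨⟨a, hint⟩, RingOfIntegers.coe_injective ha⟩
  by_contra hcl
  have hdescent : ∀ η : (𝓞 L)ˣ, (η : 𝓞 L) * s η * s (s η) = 1 →
      ∃ u : (𝓞 L)ˣ, (η : 𝓞 L) * s u = u := by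
    intro η hη
    have hnorm : Algebra.norm F (algebraMap (𝓞 L) L η) = 1 := by
      apply (algebraMap F L).injective
      rw [hnormL, map_one, ← hscoe, ← hscoe, ← map_mul, ← map_mul, hη, map_one]
    obtain ⟨a, ha0, ha⟩ := groupCohomology.exists_mul_galRestrict_of_norm_eq_one
      (A := 𝓞 F) hgen hnorm
    change _ * s a = a at ha
    set J := Ideal.span {a}
    have hJ : ∀ z ∈ J, s z ∈ J := by
      intro z hz
      obtain ⟨y, rfl⟩ := Ideal.mem_span_singleton'.1 hz
      refine Ideal.mem_span_singleton'.2 ⟨s y * ((η⁻¹ : (𝓞 L)ˣ) : 𝓞 L), ?_⟩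
      nth_rw 1 [← ha]
      rw [map_mul]
      linear_combination (s y * s a) * (η.inv_mul)
    have hmap := Ideal.map_comap_eq_of_span_sub_eq_top s hs3 hfix htop J hJ
    set I := J.comap (algebraMap (𝓞 F) (𝓞 L))
    have hI0 : I ≠ ⊥ := by
      intro h0
      rw [h0, Ideal.map_bot] at hmap
      exact ha0 (Ideal.span_singleton_eq_bot.1 hmap.symm)
    have hI3 : (I ^ 3).IsPrincipal := by
      rw [← hdeg, IsFractionRing.finrank_eq (𝓞 F) F (𝓞 L) L, ← Ideal.relNorm_algebraMap, hmap,
        Ideal.relNorm_singleton]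
      exact ⟨_, rfl⟩
    have hIp : I.IsPrincipal := by
      have hI0' : I ∈ nonZeroDivisors (Ideal (𝓞 F)) := mem_nonZeroDivisors_of_ne_zero hI0
      rw [← ClassGroup.mk0_eq_one_iff hI0']
      rw [← ClassGroup.mk0_eq_one_iff (pow_mem hI0' 3)] at hI3
      have hpow : (ClassGroup.mk0 ⟨I, hI0'⟩) ^ 3 = 1 := by
        rw [← map_pow]
        exact hI3
      by_contra hne
      have hord := orderOf_eq_prime hpow hne
      exact hcl (hord ▸ orderOf_dvd_card)
    obtain ⟨b, hb⟩ := hIp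
    have hassoc : Associated (algebraMap (𝓞 F) (𝓞 L) b) a := by
      rw [← Ideal.span_singleton_eq_span_singleton]
      rw [hb, Ideal.submodule_span_eq, Ideal.map_span, Set.image_singleton] at hmap
      exact hmap
    obtain ⟨u, hu⟩ := hassoc
    refine ⟨u, ?_⟩
    have hb0 : algebraMap (𝓞 F) (𝓞 L) b ≠ 0 := by
      rintro h0
      rw [h0, zero_mul] at hu
      exact ha0 hu.symm
    apply mul_left_cancel₀ hb0
    rw [hu, ← ha, ← hu, map_mul, s.commutes]
    ring
  have hnormpow : ∀ η : (𝓞 L)ˣ, ((η : 𝓞 L) * s η * s (s η)) ^ m = 1 := by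
    intro η
    obtain ⟨a, ha⟩ := hfix ((η : 𝓞 L) * s η * s (s η)) (by simp only [map_mul, hs3]; ring)
    obtain ⟨b, hb⟩ := hfix (((η⁻¹ : (𝓞 L)ˣ) : 𝓞 L) * s (η⁻¹ : (𝓞 L)ˣ) * s (s (η⁻¹ : (𝓞 L)ˣ)))
      (by simp only [map_mul, hs3]; ring)
    have hab : a * b = 1 := by
      apply RingOfIntegers.algebraMap.injective F L
      rw [map_mul, ha, hb, map_one]
      have h1 : s η * s (η⁻¹ : (𝓞 L)ˣ) = 1 := by rw [← map_mul, η.mul_inv, map_one]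
      have h2 : s (s η) * s (s (η⁻¹ : (𝓞 L)ˣ)) = 1 := by rw [← map_mul, h1, map_one]
      have h0 := η.mul_inv
      calc _ = ((η : 𝓞 L) * (η⁻¹ : (𝓞 L)ˣ)) * (s η * s (η⁻¹ : (𝓞 L)ˣ))
            * (s (s η) * s (s (η⁻¹ : (𝓞 L)ˣ))) := by ring
        _ = 1 := by rw [h0, h1, h2]; ring
    have := congrArg (Units.val) (hu (Units.mkOfMulEqOne a b hab))
    rw [← ha, ← map_pow]
    simp only [Units.val_pow_eq_pow_val, Units.val_mkOfMulEqOne, Units.val_one] at this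
    rw [this, map_one]
  have hstep : ∀ η : (𝓞 L)ˣ, ∃ u : (𝓞 L)ˣ, (η : 𝓞 L) ^ m * s u = u := by
    intro η
    obtain ⟨u, hu⟩ := hdescent (η ^ m) (by
      rw [← hnormpow η]; simp only [Units.val_pow_eq_pow_val, map_pow]; ring)
    exact ⟨u, by simpa using hu⟩
  have hfin : 3 ≤ finrank ℚ L := by
    rw [← finrank_mul_finrank ℚ F L, hdeg]
    have := finrank_pos (R := ℚ) (M := F)
    omega
  refine NumberField.Units.not_forall_pow_eq_pow_three hfin
    (k := m ^ 3) (fun h ↦ hm (Nat.prime_three.dvd_of_dvd_pow h)) fun η ↦ ?_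
  obtain ⟨u, hηu⟩ := hstep η
  obtain ⟨v, huv⟩ := hstep u
  let S : (𝓞 L)ˣ →* (𝓞 L)ˣ := Units.map (s : 𝓞 L →* 𝓞 L)
  have hη : η ^ m = u / S u := eq_div_of_mul_eq' (Units.ext hηu)
  have hu' : u ^ m = v / S v := eq_div_of_mul_eq' (Units.ext huv)
  have hSu : S u ^ m = S v / S (S v) := by rw [← map_pow, hu', _root_.map_div]
  have hv : (v * S v * S (S v)) ^ m = 1 := Units.ext (hnormpow v)
  refine ⟨(S v)⁻¹ ^ m, ?_⟩
  calc η ^ m ^ 3 = ((η ^ m) ^ m) ^ m := by rw [← pow_mul, ← pow_mul]; congr 1; ring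
    _ = (v / S v / (S v / S (S v))) ^ m := by rw [hη, div_pow, hu', hSu]
    _ = (v * S v * S (S v)) ^ m * ((S v)⁻¹ ^ m) ^ 3 := by
      rw [← pow_mul, mul_comm m 3, pow_mul, ← mul_pow]
      congr 1
      rw [div_div_eq_mul_div, div_mul_eq_mul_div, div_div, div_eq_mul_inv, mul_inv, pow_three]
      have : S v * (S v)⁻¹ = 1 := mul_inv_cancel _
      rw [show v * S v * S (S v) * ((S v)⁻¹ * ((S v)⁻¹ * (S v)⁻¹)) =
        v * S (S v) * ((S v)⁻¹ * (S v)⁻¹) * (S v * (S v)⁻¹) by ac_rfl, this, mul_one]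
    _ = _ := by rw [hv, one_mul]

/-- The extension generated by a root `θ` of `X ^ 3 - 3 n X - T` is unramified as soon as
`(θ - c) ^ 2 / 3` is integral for some integer `c` with `3 ∤ c ^ 2 + 2 n`. -/
theorem span_sub_eq_top_of_cubic {A B : Type*} [CommRing A] [CommRing B] [IsDomain B] [CharZero B]
    [Algebra A B] (s : B ≃ₐ[A] B) (hs : ∀ x, s (s (s x)) = x) {n T c : ℤ} (hn : n ^ 2 = 1)
    (hc : ¬ 3 ∣ c ^ 2 + 2 * n) {θ w : B} (hθ : θ ^ 3 - 3 * n * θ - T = 0) (hsθ : s θ ≠ θ)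
    (hw : 3 * w = (θ - c) ^ 2) :
    Ideal.span (Set.range fun x ↦ x - s x) = ⊤ := by
  set D := Ideal.span (Set.range fun x ↦ x - s x)
  have hmem : ∀ x, x - s x ∈ D := fun x ↦ Ideal.subset_span ⟨x, rfl⟩
  have hs_three : s 3 = 3 := map_ofNat s 3
  have hθ2 : s θ ^ 3 - 3 * n * s θ - T = 0 := by simpa [hs_three] using congrArg s hθ
  have hθ3 : s (s θ) ^ 3 - 3 * n * s (s θ) - T = 0 := by simpa [hs_three] using congrArg s hθ2
  have h32 : s (s θ) - s θ ≠ 0 := sub_ne_zero.2 fun h ↦ hsθ (s.injective h)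
  have h31 : s (s θ) - θ ≠ 0 := sub_ne_zero.2 fun h ↦ hsθ (by rw [← hs θ, ← h, hs, hs, h])
  have h21 : s θ - θ ≠ 0 := sub_ne_zero.2 hsθ
  have q2 : s θ ^ 2 + s θ * θ + θ ^ 2 = 3 * n :=
    mul_left_cancel₀ h21 (by linear_combination hθ2 - hθ)
  have q3 : s (s θ) ^ 2 + s (s θ) * θ + θ ^ 2 = 3 * n :=
    mul_left_cancel₀ h31 (by linear_combination hθ3 - hθ)
  have hsum : θ + s θ + s (s θ) = 0 :=
    mul_left_cancel₀ h32 (by linear_combination q3 - q2)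
  have h3θ : 3 * θ ∈ D := by
    have := D.add_mem (D.add_mem (hmem θ) (hmem θ)) (hmem (s θ))
    convert this using 1
    linear_combination hsum
  have hn' : (n : B) ^ 2 = 1 := by exact_mod_cast hn
  have h3 : (3 : B) ∈ D := by
    have h1 := D.mul_mem_left (s θ) (hmem θ)
    have h2 := D.mul_mem_left θ (hmem θ)
    have h3 := D.mul_mem_left θ h3θ
    have h4 := D.mul_mem_left (n : B) (D.sub_mem (D.sub_mem h3 h1) (D.add_mem h2 h2))
    convert h4 using 1
    linear_combination (-3) * hn' - n * q2
  have hw2 : 3 * s w = (s θ - c) ^ 2 := by simpa [hs_three] using congrArg s hw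
  have hw3 : 3 * s (s w) = (s (s θ) - c) ^ 2 := by simpa [hs_three] using congrArg s hw2
  have hwsum : w + s w + s (s w) = c ^ 2 + 2 * n := by
    apply mul_left_cancel₀ (show (3 : B) ≠ 0 by norm_num)
    linear_combination hw + hw2 + hw3 + 2 * q2 + (s (s θ) - (θ + s θ) - 2 * c) * hsum
  have hcn : ((c ^ 2 + 2 * n : ℤ) : B) ∈ D := by
    have := D.sub_mem (D.mul_mem_left w h3)
      (D.add_mem (D.add_mem (hmem w) (hmem w)) (hmem (s w)))
    convert this using 1
    push_cast
    linear_combination -hwsum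
  obtain ⟨a, b, hab⟩ : IsCoprime (3 : ℤ) (c ^ 2 + 2 * n) :=
    (Int.prime_three.coprime_iff_not_dvd).2 hc
  rw [Ideal.eq_top_iff_one]
  have := D.add_mem (D.mul_mem_left a h3) (D.mul_mem_left b hcn)
  convert this using 1
  exact_mod_cast hab.symm

theorem isIntegral_sq_div_three {L : Type*} [Field L] [CharZero L] {n T c b : ℤ}
    (hb : c ^ 3 - 3 * n * c - T = 9 * b) {θ : L} (hθ : θ ^ 3 - 3 * n * θ - T = 0) :
    IsIntegral ℤ ((θ - c) ^ 2 / 3) := by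
  refine ⟨X ^ 3 + C (2 * (c ^ 2 - n) - 3 * c ^ 2) * X ^ 2 + C ((c ^ 2 - n) ^ 2 - 6 * c * b) * X
    + C (-3 * b ^ 2), by monicity!, ?_⟩
  have hb' : (c : L) ^ 3 - 3 * n * c - T = 9 * b := by exact_mod_cast hb
  simp only [eval₂_add, eval₂_mul, eval₂_pow, eval₂_X, eval₂_C]
  simp only [eq_intCast]
  push_cast
  have hY : (θ - c) ^ 3 + 3 * c * (θ - c) ^ 2 + 3 * (c ^ 2 - n) * (θ - c) + 9 * b = 0 := by
    linear_combination hθ - hb'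
  generalize θ - (c : L) = Y at hY
  linear_combination (1 / 27) * hY * (Y ^ 3 + 3 * (c ^ 2 - n) * Y - 3 * c * Y ^ 2 - 9 * b)

/-- The units of `ℚ(√(-3M))` are roots of unity of order prime to `3`. -/
theorem units_pow_eq_one_of_sq_eq_neg {F : Type*} [Field F] [NumberField F] {M : ℤ} (hM : 2 ≤ M)
    (hsqf : Squarefree M) {δ : F} (hδ : δ ^ 2 = -(3 * M))
    (hspan : ∀ x : F, ∃ a b : ℚ, x = a + b * δ) (hfin : finrank ℚ F ≤ 2) :
    ∃ m : ℕ, ¬ 3 ∣ m ∧ ∀ u : (𝓞 F)ˣ, u ^ m = 1 := by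
  have hM' : (2 : ℝ) ≤ M := by exact_mod_cast hM
  have hcx : IsTotallyComplex F := by
    refine ⟨fun v ↦ ?_⟩
    rw [← InfinitePlace.not_isReal_iff_isComplex]
    intro hv
    have h1 := congrArg (InfinitePlace.embedding_of_isReal hv) hδ
    simp only [map_pow, map_neg, map_mul, map_ofNat, map_intCast] at h1
    nlinarith [sq_nonneg (InfinitePlace.embedding_of_isReal hv δ)]
  have hrank : Units.rank F = 0 := by
    have h1 := InfinitePlace.card_add_two_mul_card_eq_rank F
    have h2 := InfinitePlace.card_eq_nrRealPlaces_add_nrComplexPlaces F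
    have h3 := IsTotallyComplex.nrRealPlaces_eq_zero F
    rw [Units.rank]
    omega
  refine ⟨Nat.card (Units.torsion F), fun h3 ↦ ?_, fun u ↦ ?_⟩
  · have : Fact (Nat.Prime 3) := ⟨Nat.prime_three⟩
    obtain ⟨⟨z, hz⟩, hord⟩ := exists_prime_orderOf_dvd_card' 3 h3
    rw [← Subgroup.orderOf_coe] at hord
    set ω : F := algebraMap (𝓞 F) F z
    have hω3 : ω ^ 3 = 1 := by
      have : z ^ 3 = 1 := by rw [← hord]; exact pow_orderOf_eq_one z
      have := congrArg (fun x : (𝓞 F)ˣ ↦ algebraMap (𝓞 F) F x) this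
      simpa using this
    have hω1 : ω ≠ 1 := by
      intro h
      have : z = 1 := Units.ext (RingOfIntegers.coe_injective (h.trans (map_one _).symm))
      simp [this] at hord
    have hq : (2 * ω + 1) ^ 2 = -3 := by
      have : ω ^ 2 + ω + 1 = 0 :=
        mul_left_cancel₀ (sub_ne_zero.2 hω1) (by linear_combination hω3)
      linear_combination 4 * this
    obtain ⟨x, y, hxy⟩ := hspan (2 * ω + 1)
    rw [hxy] at hq
    have hxy0 : 2 * x * y = 0 := by
      by_contra hne
      have hne' : (2 * x * y : F) ≠ 0 := by exact_mod_cast hne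
      have hδq : δ = ((-3 - x ^ 2 + 3 * M * y ^ 2) / (2 * x * y) : ℚ) := by
        push_cast
        rw [eq_div_iff hne']
        linear_combination hq - y ^ 2 * hδ
      rw [hδq] at hδ
      have hδ' : ((-3 - x ^ 2 + 3 * M * y ^ 2) / (2 * x * y) : ℚ) ^ 2 = -(3 * M) := by
        exact_mod_cast hδ
      have : (2 : ℚ) ≤ M := by exact_mod_cast hM
      nlinarith [sq_nonneg ((-3 - x ^ 2 + 3 * M * y ^ 2) / (2 * x * y) : ℚ)]
    have hxyq : x ^ 2 - 3 * M * y ^ 2 = -3 := by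
      have hxy0' : (2 * x * y : F) = 0 := by exact_mod_cast hxy0
      have : (x ^ 2 - 3 * M * y ^ 2 : F) = -3 := by
        linear_combination hq - y ^ 2 * hδ - δ * hxy0'
      exact_mod_cast this
    rcases mul_eq_zero.1 hxy0 with hx | rfl
    · have hx : x = 0 := by simpa using hx
      subst hx
      have hy : (M : ℚ) * y ^ 2 = 1 := by linarith
      have hnum : M * y.num ^ 2 = (y.den : ℤ) ^ 2 := by
        rw [← Rat.num_div_den y] at hy
        have hd : (y.den : ℚ) ≠ 0 := by exact_mod_cast y.den_nz
        field_simp at hy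
        exact_mod_cast hy
      have hcop : IsCoprime (y.num ^ 2) ((y.den : ℤ) ^ 2) :=
        (Rat.isCoprime_num_den y).pow
      have hunit : IsUnit (y.num ^ 2) := hcop.isUnit_of_dvd' dvd_rfl ⟨M, by rw [← hnum]; ring⟩
      have hn1 : y.num ^ 2 = 1 := by
        rcases Int.isUnit_iff.1 hunit with h | h
        · exact h
        · nlinarith [sq_nonneg y.num]
      rw [hn1, mul_one] at hnum
      have := Int.isUnit_iff.1 (hsqf (y.den : ℤ) ⟨1, by rw [hnum]; ring⟩)
      rcases this with h | h <;> rw [h] at hnum <;> omega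
    · nlinarith [sq_nonneg x]
  · obtain ⟨⟨ζ, e⟩, he, -⟩ := Units.exist_unique_eq_mul_prod F u
    have : IsEmpty (Fin (Units.rank F)) := by rw [hrank]; infer_instance
    simp only [Finset.univ_eq_empty, Finset.prod_empty, mul_one] at he
    rw [he]
    exact_mod_cast congrArg Subtype.val (pow_card_eq_one' (x := ζ))

theorem Squarefree.dvd_of_sq_dvd_mul_sq {M q r : ℤ} (hM : Squarefree M)
    (hr : r ≠ 0) (h : q ^ 2 ∣ M * r ^ 2) : q ∣ r := by
  have hpos : 0 < Int.gcd q r := Int.gcd_pos_of_ne_zero_right _ hr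
  obtain ⟨q', r', hcop, hq, hr'⟩ := Int.exists_gcd_one hpos
  set g : ℤ := (Int.gcd q r : ℤ)
  have hg : g ≠ 0 := by positivity
  have h1 : q' ^ 2 ∣ M * r' ^ 2 := by
    rw [← mul_dvd_mul_iff_right (pow_ne_zero 2 hg)]
    rw [hq, hr'] at h
    rwa [mul_assoc, ← mul_pow, ← mul_pow]
  have h2 : q' * q' ∣ M := by
    rw [← sq]
    exact ((Int.isCoprime_iff_gcd_eq_one.2 hcop).pow).dvd_of_dvd_mul_right h1
  have h3 : q' ∣ r' := (hM q' h2).dvd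
  rw [hq, hr']
  exact mul_dvd_mul_right h3 g

/-- An integer root of `X ^ 3 - 3 n X - T` yields a cube root of the unit `(T + r√M) / 2`. -/
theorem exists_cube_eq_of_int_root {n T M r u : ℤ} (hM : 0 ≤ M) (hsqf : Squarefree M)
    (hr : r ≠ 0) (heq : T ^ 2 - 4 * n = M * r ^ 2) (hn : n ^ 2 = 1)
    (hu : u ^ 3 - 3 * n * u - T = 0) :
    ∃ v : ℤ, u ^ 2 - M * v ^ 2 = 4 * n ∧
      (((u : ℝ) + (v : ℝ) * Real.sqrt M) / 2) ^ 3 = ((T : ℝ) + (r : ℝ) * Real.sqrt M) / 2 := by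
  have hfac : (u ^ 2 - 4 * n) * (u ^ 2 - n) ^ 2 = M * r ^ 2 := by
    linear_combination (u ^ 3 - 3 * n * u + T) * hu + heq - 4 * n * hn
  obtain ⟨v, hv⟩ : u ^ 2 - n ∣ r :=
    hsqf.dvd_of_sq_dvd_mul_sq hr ⟨u ^ 2 - 4 * n, by rw [← hfac]; ring⟩
  have hq : u ^ 2 - n ≠ 0 := fun h ↦ hr (by rw [hv, h, zero_mul])
  have huv : u ^ 2 - M * v ^ 2 = 4 * n := by
    apply mul_right_cancel₀ (pow_ne_zero 2 hq)
    rw [hv] at hfac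
    linear_combination hfac
  refine ⟨v, huv, ?_⟩
  have hs : Real.sqrt M ^ 2 = M := Real.sq_sqrt (by exact_mod_cast hM)
  have huv' : (u : ℝ) ^ 2 - M * v ^ 2 = 4 * n := by exact_mod_cast huv
  have hu' : (u : ℝ) ^ 3 - 3 * n * u - T = 0 := by exact_mod_cast hu
  have hv' : (r : ℝ) = (u ^ 2 - n) * v := by exact_mod_cast hv
  linear_combination (1 / 8) * (3 * u * v ^ 2 + v ^ 3 * Real.sqrt M) * hs
    - (1 / 8) * (3 * u + v * Real.sqrt M) * huv' + (1 / 2) * hu' - (1 / 2) * Real.sqrt M * hv'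

/-- The cubic polynomial `X ^ 3 - 3 n X - T` with integer parameters `n` and `T`. -/
noncomputable def traceCubic (R : Type*) [CommRing R] (n T : ℤ) : R[X] :=
  X ^ 3 - C (3 * (n : R)) * X - C (T : R)

theorem traceCubic_monic (R : Type*) [CommRing R] [Nontrivial R] (n T : ℤ) :
    (traceCubic R n T).Monic := by
  rw [traceCubic]
  monicity!

theorem traceCubic_natDegree (R : Type*) [CommRing R] [Nontrivial R] (n T : ℤ) :
    (traceCubic R n T).natDegree = 3 := by
  rw [traceCubic]
  compute_degree!

theorem aeval_traceCubic {R S : Type*} [CommRing R] [CommRing S] [Algebra R S] (n T : ℤ) (x : S) :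
    aeval x (traceCubic R n T) = x ^ 3 - 3 * n * x - T := by
  simp [traceCubic, map_ofNat (algebraMap R S) 3]

theorem traceCubic_irreducible_of_forall_ne {K : Type*} [Field K] {n T : ℤ}
    (h : ∀ x : K, x ^ 3 - 3 * n * x - T ≠ 0) : Irreducible (traceCubic K n T) := by
  refine irreducible_of_degree_le_three_of_not_isRoot
    (by simp [traceCubic_natDegree]) fun x hx ↦ h x ?_
  rw [← aeval_traceCubic (R := K), coe_aeval_eq_eval]
  exact hx

theorem traceCubic_ne_zero_of_finrank_le_two {F : Type*} [Field F] [NumberField F]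
    (hfin : finrank ℚ F ≤ 2) {n T : ℤ} (hint : ∀ u : ℤ, u ^ 3 - 3 * n * u - T ≠ 0) (x : F) :
    x ^ 3 - 3 * n * x - T ≠ 0 := by
  have hrat : ∀ q : ℚ, q ^ 3 - 3 * n * q - T ≠ 0 := by
    intro q hq
    have hq' : aeval q (traceCubic ℤ n T) = 0 := by rw [aeval_traceCubic, hq]
    obtain ⟨u, hu⟩ := isInteger_of_is_root_of_monic (traceCubic_monic ℤ n T) hq'
    rw [eq_intCast] at hu
    rw [← hu] at hq
    exact hint u (by exact_mod_cast hq)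
  intro hx
  have hirr := traceCubic_irreducible_of_forall_ne hrat
  have hmin := minpoly.eq_of_irreducible_of_monic hirr
    (by rw [aeval_traceCubic, hx] : aeval x (traceCubic ℚ n T) = 0) (traceCubic_monic ℚ n T)
  have := minpoly.natDegree_le (A := ℚ) x
  rw [← hmin, traceCubic_natDegree] at this
  omega

/-- The splitting field of `X ^ 3 - 3 n X - T` over a field containing `√(-3M)` is generated by any
one root, the discriminant `-27 M r ^ 2` being a square. -/
theorem adjoin_root_eq_top_of_isSplittingField {F L : Type*} [Field F] [CharZero F] [Field L]
    [Algebra F L] {n T M r : ℤ} [IsSplittingField F L (traceCubic F n T)] (hn : n ^ 2 = 1)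
    (heq : T ^ 2 - 4 * n = M * r ^ 2) (hMr : M * r ^ 2 ≠ 0) {δ : F} (hδ : δ ^ 2 = -(3 * M))
    {θ : L} (hθ : θ ^ 3 - 3 * n * θ - T = 0) :
    IntermediateField.adjoin F {θ} = ⊤ := by
  have : CharZero L := charZero_of_injective_algebraMap (algebraMap F L).injective
  have hn' : (n : L) ^ 2 = 1 := by exact_mod_cast hn
  have heq' : (T : L) ^ 2 - 4 * n = M * r ^ 2 := by exact_mod_cast heq
  have hδ' : (algebraMap F L δ) ^ 2 = -(3 * M) := by
    rw [← map_pow, hδ]; simp [map_ofNat (algebraMap F L) 3]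
  have hne : θ ^ 2 - n ≠ 0 := by
    intro h
    have : ((M * r ^ 2 : ℤ) : L) = 0 := by
      push_cast
      linear_combination -heq' - (T + θ ^ 3 - 3 * n * θ) * hθ
        + (θ ^ 4 - 5 * n * θ ^ 2 + 4 * n ^ 2) * h + 4 * n * hn'
    exact hMr (by exact_mod_cast this)
  have hmemθ : θ ∈ IntermediateField.adjoin F {θ} := IntermediateField.mem_adjoin_simple_self F θ
  have hroot : ∀ y : L, y ^ 3 - 3 * n * y - T = 0 → y ∈ IntermediateField.adjoin F {θ} := by
    intro y hy
    by_cases hyθ : y = θ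
    · rwa [hyθ]
    have hq : y ^ 2 + y * θ + θ ^ 2 = 3 * n :=
      mul_left_cancel₀ (sub_ne_zero.2 hyθ) (by linear_combination hy - hθ)
    have hsq : ((2 * y + θ) * (θ ^ 2 - n)) ^ 2 = (r * algebraMap F L δ) ^ 2 := by
      linear_combination 4 * (θ ^ 2 - n) ^ 2 * hq - 3 * (θ ^ 3 - 3 * n * θ + T) * hθ - 3 * heq'
        + 12 * n * hn' - r ^ 2 * hδ'
    have hd : algebraMap F L δ ∈ IntermediateField.adjoin F {θ} :=
      IntermediateField.algebraMap_mem _ δ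
    have hmem : ∀ z : L, z = r * algebraMap F L δ ∨ z = -(r * algebraMap F L δ) →
        z ∈ IntermediateField.adjoin F {θ} := by
      rintro z (rfl | rfl)
      · exact mul_mem (intCast_mem _ r) hd
      · exact neg_mem (mul_mem (intCast_mem _ r) hd)
    have h1 := hmem _ (sq_eq_sq_iff_eq_or_eq_neg.1 hsq)
    have h2 : y = (((2 * y + θ) * (θ ^ 2 - n)) / (θ ^ 2 - n) - θ) / ((2 : ℤ) : L) := by
      field_simp
      push_cast
      ring
    rw [h2]
    exact div_mem (sub_mem (div_mem h1 (sub_mem (pow_mem hmemθ 2) (intCast_mem _ n))) hmemθ)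
      (intCast_mem _ 2)
  have hle : Algebra.adjoin F ((traceCubic F n T).rootSet L)
      ≤ (IntermediateField.adjoin F {θ}).toSubalgebra := by
    refine Algebra.adjoin_le fun y hy ↦ hroot y ?_
    rw [← aeval_traceCubic (R := F)]
    exact aeval_eq_zero_of_mem_rootSet hy
  rw [IsSplittingField.adjoin_rootSet] at hle
  rw [eq_top_iff]
  exact fun y _ ↦ hle Algebra.mem_top

/-- If `X ^ 3 - 3 n X - T` has no integer root and satisfies a congruence condition at `3`, its
splitting field is an unramified cyclic cubic extension of `F = ℚ(√(-3M))`, and so `3` divides the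
class number of `F`. -/
theorem three_dvd_classNumber_of_traceCubic {F : Type} [Field F] [NumberField F]
    (hfin : finrank ℚ F ≤ 2) {n T M r c b : ℤ} (hn : n ^ 2 = 1) (hM : 2 ≤ M)
    (hsqf : Squarefree M) (hr : r ≠ 0) (heq : T ^ 2 - 4 * n = M * r ^ 2)
    (hint : ∀ u : ℤ, u ^ 3 - 3 * n * u - T ≠ 0)
    (hb : c ^ 3 - 3 * n * c - T = 9 * b) (hc : ¬ 3 ∣ c ^ 2 + 2 * n)
    {δ : F} (hδ : δ ^ 2 = -(3 * M)) (hspan : ∀ x : F, ∃ a b : ℚ, x = a + b * δ) :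
    3 ∣ classNumber F := by
  obtain ⟨m, hm, hu⟩ := units_pow_eq_one_of_sq_eq_neg hM hsqf hδ hspan hfin
  have hnoroot := traceCubic_ne_zero_of_finrank_le_two hfin hint
  let f := traceCubic F n T
  have hirr : Irreducible f := traceCubic_irreducible_of_forall_ne hnoroot
  let L := f.SplittingField
  have : NumberField L := NumberField.of_module_finite F L
  have : IsGalois F L := IsGalois.of_separable_splitting_field (p := f) hirr.separable
  have hMr : M * r ^ 2 ≠ 0 := mul_ne_zero (by omega) (pow_ne_zero 2 hr)
  obtain ⟨θ, hθ'⟩ := (SplittingField.splits f).exists_eval_eq_zero (by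
    rw [degree_map]
    exact hirr.degree_pos.ne')
  have hθ : θ ^ 3 - 3 * n * θ - T = 0 := by
    rw [← aeval_traceCubic (R := F), ← hθ', eval_map_algebraMap]
  have htop := adjoin_root_eq_top_of_isSplittingField (L := L) hn heq hMr hδ hθ
  have hdeg : finrank F L = 3 := by
    rw [← IntermediateField.finrank_top', ← htop,
      IntermediateField.adjoin.finrank (Algebra.IsIntegral.isIntegral θ),
      ← minpoly.eq_of_irreducible_of_monic hirr (by rw [aeval_traceCubic, hθ])
        (traceCubic_monic F n T), traceCubic_natDegree]
  have hcard : Nat.card Gal(L/F) = 3 := by rw [IsGalois.card_aut_eq_finrank, hdeg]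
  have : Nontrivial Gal(L/F) := Finite.one_lt_card_iff_nontrivial.1 (by omega)
  obtain ⟨σ, hσ⟩ := exists_ne (1 : Gal(L/F))
  have hσ3 : ∀ x, σ (σ (σ x)) = x := by
    intro x
    have : σ ^ 3 = 1 := by rw [← hcard, pow_card_eq_one']
    exact DFunLike.congr_fun this x
  have hσθ : σ θ ≠ θ := by
    intro h
    refine hσ (AlgEquiv.ext fun x ↦ ?_)
    have hx : x ∈ IntermediateField.adjoin F {θ} := htop ▸ IntermediateField.mem_top
    induction hx using IntermediateField.adjoin_induction with
    | mem y hy => rw [Set.mem_singleton_iff.1 hy, h, AlgEquiv.one_apply]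
    | algebraMap a => simp
    | add y z _ _ hy hz => rw [map_add, map_add, hy, hz]
    | inv y _ hy => rw [map_inv₀, map_inv₀, hy]
    | mul y z _ _ hy hz => rw [map_mul, map_mul, hy, hz]
  let s := galRestrict (𝓞 F) F L (𝓞 L) σ
  have hscoe : ∀ x : 𝓞 L, algebraMap (𝓞 L) L (s x) = σ (algebraMap (𝓞 L) L x) := fun x ↦
    algebraMap_galRestrict_apply (𝓞 F) σ x
  have hθint : IsIntegral ℤ θ :=
    ⟨traceCubic ℤ n T, traceCubic_monic ℤ n T, by
      rw [← aeval_def, aeval_traceCubic, hθ]⟩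
  obtain ⟨θ₀, hθ₀⟩ : ∃ x : 𝓞 L, algebraMap (𝓞 L) L x = θ := ⟨⟨θ, hθint⟩, rfl⟩
  obtain ⟨w₀, hw₀⟩ : ∃ x : 𝓞 L, algebraMap (𝓞 L) L x = (θ - c) ^ 2 / 3 :=
    ⟨⟨_, isIntegral_sq_div_three hb hθ⟩, rfl⟩
  refine NumberField.three_dvd_classNumber_of_span_sub_eq_top hdeg σ hσ ?_ hm hu
  refine span_sub_eq_top_of_cubic s (fun x ↦ ?_) hn hc (T := T) (θ := θ₀) (w := w₀) ?_ ?_ ?_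
  · apply RingOfIntegers.coe_injective
    simp only [hscoe, hσ3]
  · apply RingOfIntegers.coe_injective
    rw [map_sub, map_sub, map_mul, map_mul, map_pow, map_intCast, map_intCast, map_ofNat,
      map_zero, hθ₀, hθ]
  · intro h
    have hcoe := congrArg (algebraMap (𝓞 L) L) h
    rw [hscoe, hθ₀] at hcoe
    exact hσθ hcoe
  · apply RingOfIntegers.coe_injective
    rw [map_mul, map_pow, map_sub, map_intCast, map_ofNat, hθ₀, hw₀]
    exact mul_div_cancel₀ _ three_ne_zero

/-- with `T = t₀ + 9t`, `t₀ ∈ {0, 4, 5}`, `T² + 4 = M·r²`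
(or `T² − 4 = M·r²` when `t₀ = 0`), `M ≥ 2` squarefree, `r ≥ 1`, if the unit
`E = (T + r√M)/2` of `O_{ℚ(√M)}` is not the cube of a unit of `O_{ℚ(√M)}`, then
`3` divides the class number of the imaginary quadratic field `ℚ(√(−3M))`. -/
theorem three_divides_class_number_of_mirror_field
    (t₀ t : ℤ) (ht₀ : t₀ = 0 ∨ t₀ = 4 ∨ t₀ = 5) (ht : 1 ≤ t)
    (T : ℤ) (hT : T = t₀ + 9 * t)
    (M r : ℤ) (hM : 2 ≤ M) (hsqf : Squarefree M) (hr : 1 ≤ r)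
    (heq : T ^ 2 + 4 = M * r ^ 2 ∨ (t₀ = 0 ∧ T ^ 2 - 4 = M * r ^ 2))
    (hnotcube : ¬∃ u v : ℤ, (u ^ 2 - M * v ^ 2 = 4 ∨ u ^ 2 - M * v ^ 2 = -4) ∧
      (((u : ℝ) + (v : ℝ) * Real.sqrt M) / 2) ^ 3 =
        ((T : ℝ) + (r : ℝ) * Real.sqrt M) / 2) :
    ∀ (F : IntermediateField ℚ ℂ) [NumberField F],
      F = IntermediateField.adjoin ℚ
        {((Real.sqrt (3 * (M : ℝ)) : ℝ) : ℂ) * Complex.I} →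
      3 ∣ NumberField.classNumber F := by
  intro F _ hF
  obtain ⟨n, c, b, hn, hT4, hb, hc⟩ : ∃ n c b : ℤ, n ^ 2 = 1 ∧ T ^ 2 - 4 * n = M * r ^ 2 ∧
      c ^ 3 - 3 * n * c - T = 9 * b ∧ ¬ 3 ∣ c ^ 2 + 2 * n := by
    rcases ht₀ with rfl | rfl | rfl
    · rcases heq with h | ⟨-, h⟩
      · exact ⟨-1, 0, -t, by norm_num, by linarith, by rw [hT]; ring, by norm_num⟩
      · exact ⟨1, 0, -t, by norm_num, by linarith, by rw [hT]; ring, by norm_num⟩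
    · have h := heq.resolve_right (by simp)
      refine ⟨-1, T, 8 + 50 * t + 108 * t ^ 2 + 81 * t ^ 3, by norm_num, by linarith,
        by rw [hT]; ring, ?_⟩
      rw [hT]
      rintro ⟨k, hk⟩
      ring_nf at hk
      omega
    · have h := heq.resolve_right (by simp)
      refine ⟨-1, T, 15 + 77 * t + 135 * t ^ 2 + 81 * t ^ 3, by norm_num, by linarith,
        by rw [hT]; ring, ?_⟩
      rw [hT]
      rintro ⟨k, hk⟩
      ring_nf at hk
      omega
  have hint : ∀ u : ℤ, u ^ 3 - 3 * n * u - T ≠ 0 := by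
    intro u hu
    obtain ⟨v, huv, hcube⟩ :=
      exists_cube_eq_of_int_root (by omega) hsqf (by omega) hT4 hn hu
    refine hnotcube ⟨u, v, ?_, hcube⟩
    rcases sq_eq_one_iff.1 hn with rfl | rfl
    · exact Or.inl huv
    · exact Or.inr huv
  set d : ℂ := ((Real.sqrt (3 * (M : ℝ)) : ℝ) : ℂ) * Complex.I
  have hd : d ^ 2 = -(3 * M) := by
    have hs : Real.sqrt (3 * (M : ℝ)) ^ 2 = 3 * M := Real.sq_sqrt (by positivity)
    have hs' : ((Real.sqrt (3 * (M : ℝ)) : ℝ) : ℂ) ^ 2 = 3 * M := by exact_mod_cast hs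
    rw [mul_pow, hs', Complex.I_sq]
    ring
  have hmonic : (X ^ 2 + C (3 * (M : ℚ))).Monic := by monicity!
  have haeval : aeval d (X ^ 2 + C (3 * (M : ℚ))) = 0 := by
    simp [hd]
  have hdint : IsIntegral ℚ d := ⟨_, hmonic, haeval⟩
  have hfin : finrank ℚ F ≤ 2 := by
    rw [hF, IntermediateField.adjoin.finrank hdint]
    have := natDegree_le_natDegree (minpoly.min ℚ d hmonic haeval)
    refine this.trans ?_
    compute_degree
  have hdF : d ∈ F := hF ▸ IntermediateField.mem_adjoin_simple_self ℚ d
  have hspan : ∀ x ∈ F, ∃ a b : ℚ, x = a + b * d := by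
    intro x hx
    rw [hF, ← IntermediateField.mem_toSubalgebra,
      IntermediateField.adjoin_simple_toSubalgebra_of_isAlgebraic hdint.isAlgebraic] at hx
    induction hx using Algebra.adjoin_induction with
    | mem x hx => exact ⟨0, 1, by simpa using hx⟩
    | algebraMap q => exact ⟨q, 0, by simp⟩
    | add x y _ _ hx hy =>
      obtain ⟨a, b, rfl⟩ := hx
      obtain ⟨a', b', rfl⟩ := hy
      exact ⟨a + a', b + b', by push_cast; ring⟩
    | mul x y _ _ hx hy =>
      obtain ⟨a, b, rfl⟩ := hx
      obtain ⟨a', b', rfl⟩ := hy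
      refine ⟨a * a' - 3 * M * b * b', a * b' + a' * b, ?_⟩
      push_cast
      linear_combination b * b' * hd
  refine three_dvd_classNumber_of_traceCubic hfin hn hM hsqf (by omega) hT4 hint hb hc
    (δ := ⟨d, hdF⟩) (Subtype.ext ?_) fun x ↦ ?_
  · exact hd
  · obtain ⟨p, q, hpq⟩ := hspan x x.2
    exact ⟨p, q, Subtype.ext (by simpa using hpq)⟩
end

section
/- Let p ≥ 5 be a prime, s ∈ {−1, 1}, and t ≥ 1 an integer. Suppose p⁴t² − 4s = M·r² with M ≥ 2 squarefree and r ≥ 1, and let E = (p²t + r√M)/2, a unit of norm s of the ring of integers O_K of K = ℚ(√M). Let ζ_p = exp(2πi/p) ∈ ℂ and let F = ℚ((ζ_p − ζ_p^{−1})·√M), the imaginary cyclic subfield of degree p − 1 of ℚ(ζ_p, √M) distinct from ℚ(ζ_p). If E is not a pth power in the unit group of O_K, then p divides the class number of F. -/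
open Polynomial Module NumberField IntermediateField

/-- Modulo a prime `p`, the polynomials `(X - 1) ^ (p - 1)` and `1 + X + ⋯ + X ^ (p - 1)` agree. -/
lemma exists_X_sub_one_pow_eq_geom_sum_add (p : ℕ) [hp : Fact p.Prime] :
    ∃ q : ℤ[X], (X - 1) ^ (p - 1) = ∑ i ∈ Finset.range p, X ^ i + C (p : ℤ) * q := by
  have key : (((X - 1) ^ (p - 1) - ∑ i ∈ Finset.range p, X ^ i : ℤ[X]).map
      (Int.castRingHom (ZMod p))) = 0 := by
    have h1 : (X - 1 : (ZMod p)[X]) ≠ 0 := by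
      simpa using X_sub_C_ne_zero (1 : ZMod p)
    apply mul_right_cancel₀ h1
    have h2 : (X - 1 : (ZMod p)[X]) ^ p = X ^ p - 1 := by
      simpa using sub_pow_char (X : (ZMod p)[X]) 1 (p := p)
    simp only [Polynomial.map_sub, Polynomial.map_pow, map_X, Polynomial.map_one,
      Polynomial.map_sum, sub_mul, geom_sum_mul, zero_mul]
    rw [← pow_succ, Nat.sub_add_cancel hp.out.one_le, h2, sub_self]
  obtain ⟨q, hq⟩ : C (p : ℤ) ∣ ((X - 1) ^ (p - 1) - ∑ i ∈ Finset.range p, X ^ i : ℤ[X]) := by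
    rw [C_dvd_iff_dvd_coeff]
    intro i
    have := congrArg (fun f => f.coeff i) key
    rw [← ZMod.intCast_zmod_eq_zero_iff_dvd]
    simpa only [coeff_map, coeff_zero, eq_intCast] using this
  exact ⟨q, by rw [← hq]; ring⟩

section Index

variable {W : Type*} [AddCommGroup W] [Module.Finite ℤ W]

lemma pow_finrank_dvd_index_range_nsmul (n : ℕ) :
    n ^ finrank ℤ W ∣ (nsmulAddMonoidHom (α := W) n).range.index := by
  let T := Submodule.torsion ℤ W
  let π : W →+ W ⧸ T := T.mkQ.toAddMonoidHom
  have hπ : Function.Surjective π := T.mkQ_surjective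
  have h1 := AddSubgroup.index_range_nsmul (W ⧸ T) n
  rw [← AddSubgroup.index_comap_of_surjective _ hπ, finrank_quotient_eq_of_le_torsion le_rfl] at h1
  rw [← h1]
  apply AddSubgroup.index_dvd_of_le
  rintro _ ⟨w, rfl⟩
  exact ⟨π w, by simp⟩

lemma index_range_nsmul_of_torsion_trivial (p : ℕ)
    (hp : ∀ w : W, p • w = 0 → w = 0) :
    (nsmulAddMonoidHom (α := W) p).range.index = p ^ finrank ℤ W := by
  let T := Submodule.torsion ℤ W
  let π : W →+ W ⧸ T := T.mkQ.toAddMonoidHom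
  have hπ : Function.Surjective π := T.mkQ_surjective
  have h1 := AddSubgroup.index_range_nsmul (W ⧸ T) p
  rw [← AddSubgroup.index_comap_of_surjective _ hπ, finrank_quotient_eq_of_le_torsion le_rfl] at h1
  rw [← h1]
  congr 1
  apply le_antisymm
  · rintro _ ⟨w, rfl⟩
    exact ⟨π w, by simp⟩
  · rintro w ⟨y, hy⟩
    obtain ⟨v, rfl⟩ := hπ y
    have hT : w - p • v ∈ T := by
      rw [← Submodule.ker_mkQ T, LinearMap.mem_ker]
      change π (w - p • v) = 0
      rw [map_sub, map_nsmul, ← hy]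
      simp
    have : Finite T := Module.finite_of_fg_torsion _ (Submodule.torsion_isTorsion)
    have hs : Function.Surjective (fun x : T => p • x) := Finite.surjective_of_injective (by
      intro x y hxy
      have : p • ((x - y : T) : W) = 0 := by
        have := congrArg Subtype.val (sub_eq_zero.mpr hxy)
        simpa [smul_sub] using this
      exact sub_eq_zero.mp (Subtype.ext (hp _ this)))
    obtain ⟨x, hx⟩ := hs ⟨_, hT⟩
    refine ⟨v + x, ?_⟩
    have := congrArg Subtype.val hx
    simp only [Submodule.coe_smul_of_tower] at this
    simp [this]

end Index

lemma index_range_pow_dvd {V : Type*} [AddCommGroup V] (f : Module.End ℤ V) (k : ℕ) :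
    (LinearMap.toAddMonoidHom (f ^ k)).range.index ∣ (LinearMap.toAddMonoidHom f).range.index ^ k := by
  induction k with
  | zero =>
    have : (LinearMap.toAddMonoidHom (f ^ 0)).range = ⊤ := by
      rw [AddMonoidHom.range_eq_top]; exact fun x => ⟨x, rfl⟩
    rw [this]; simp
  | succ k ih =>
    have : (LinearMap.toAddMonoidHom (f ^ (k+1))).range =
      (LinearMap.toAddMonoidHom (f ^ k)).range.map (LinearMap.toAddMonoidHom f) := by
      rw [AddMonoidHom.map_range, pow_succ']; rfl
    rw [this, AddSubgroup.index_map, pow_succ]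
    exact mul_dvd_mul_right ((AddSubgroup.index_dvd_of_le le_sup_left).trans ih) _

section CyclicAction

variable {U : Type*} [AddCommGroup U] (p : ℕ) (σ : Module.End ℤ U)

/-- The endomorphism of the image of `σ - 1` induced by `σ - 1`. -/
def subOneRestrict : Module.End ℤ (LinearMap.range (σ - 1)) :=
  (σ - 1).restrict fun x _ => ⟨x, rfl⟩

lemma subOneRestrict_apply (v : LinearMap.range (σ - 1)) :
    (subOneRestrict σ v : U) = (σ - 1) (v : U) := rfl

lemma mem_ker_sub_one_iff {u : U} : u ∈ LinearMap.ker (σ - 1) ↔ σ u = u := by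
  rw [LinearMap.mem_ker, LinearMap.sub_apply, sub_eq_zero, Module.End.one_apply]

variable {p σ}

lemma geom_sum_apply_of_fixed {u : U} (hu : σ u = u) :
    (∑ i ∈ Finset.range p, σ ^ i) u = p • u := by
  have h2 (i : ℕ) : (σ ^ i) u = u := by
    induction i with
    | zero => rfl
    | succ i ih => rw [pow_succ, Module.End.mul_apply, hu, ih]
  simp [LinearMap.sum_apply, h2]

lemma geom_sum_apply_of_mem_range (hσ : σ ^ p = 1) {u : U} (hu : u ∈ LinearMap.range (σ - 1)) :
    (∑ i ∈ Finset.range p, σ ^ i) u = 0 := by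
  obtain ⟨v, rfl⟩ := hu
  rw [← Module.End.mul_apply, geom_sum_mul, hσ, sub_self, LinearMap.zero_apply]

lemma geom_sum_apply_mem_ker (hσ : σ ^ p = 1) (u : U) :
    (∑ i ∈ Finset.range p, σ ^ i) u ∈ LinearMap.ker (σ - 1) := by
  rw [LinearMap.mem_ker, ← Module.End.mul_apply, mul_geom_sum, hσ, sub_self, LinearMap.zero_apply]

lemma index_range_subOneRestrict_dvd (hσ : σ ^ p = 1)
    (hker : LinearMap.ker (∑ i ∈ Finset.range p, σ ^ i) ≤ LinearMap.range (σ - 1)) :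
    (LinearMap.toAddMonoidHom (subOneRestrict σ)).range.index ∣
      (nsmulAddMonoidHom (α := LinearMap.ker (σ - 1)) p).range.index := by
  rw [← AddSubgroup.index_comap_of_surjective _ (f := (σ - 1).rangeRestrict.toAddMonoidHom)
    (σ - 1).surjective_rangeRestrict]
  let N' : U →+ LinearMap.ker (σ - 1) :=
    (LinearMap.codRestrict (LinearMap.ker (σ - 1)) (∑ i ∈ Finset.range p, σ ^ i)
      (geom_sum_apply_mem_ker hσ)).toAddMonoidHom
  refine (AddSubgroup.index_dvd_of_le
    (H := (nsmulAddMonoidHom (α := LinearMap.ker (σ - 1)) p).range.comap N') ?_).trans ?_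
  · rintro u ⟨w, hw⟩
    have hw' : (∑ i ∈ Finset.range p, σ ^ i) u = p • (w : U) := (congrArg Subtype.val hw).symm
    have hmem : u - w ∈ LinearMap.range (σ - 1) := hker (by
      rw [LinearMap.mem_ker, map_sub, hw',
        geom_sum_apply_of_fixed ((mem_ker_sub_one_iff σ).mp w.2), sub_self])
    refine ⟨⟨u - w, hmem⟩, Subtype.ext ?_⟩
    change (σ - 1) (u - w) = (σ - 1) u
    rw [map_sub, sub_eq_self]
    exact w.2
  · rw [AddSubgroup.index_comap]
    exact AddSubgroup.relIndex_dvd_index_of_normal _ _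

lemma range_subOneRestrict_pow_le [hp : Fact p.Prime] (hσ : σ ^ p = 1) :
    (LinearMap.toAddMonoidHom (subOneRestrict σ ^ (p - 1))).range ≤
      (nsmulAddMonoidHom (α := LinearMap.range (σ - 1)) p).range := by
  obtain ⟨q, hq⟩ := exists_X_sub_one_pow_eq_geom_sum_add p
  have hq' := congrArg (aeval (subOneRestrict σ + 1)) hq
  simp only [map_pow, map_sub, aeval_X, map_one, add_sub_cancel_right, map_add, map_sum, map_mul,
    aeval_C] at hq'
  have hN0 : ∑ i ∈ Finset.range p, (subOneRestrict σ + 1) ^ i = 0 := by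
    have h3 (i : ℕ) (v : LinearMap.range (σ - 1)) :
        (((subOneRestrict σ + 1) ^ i) v : U) = (σ ^ i) v := by
      induction i generalizing v with
      | zero => rfl
      | succ i ih =>
        rw [pow_succ, Module.End.mul_apply, ih, pow_succ, Module.End.mul_apply]
        congr 1
        rw [LinearMap.add_apply, Submodule.coe_add, subOneRestrict_apply]
        simp
    ext v
    have := geom_sum_apply_of_mem_range hσ v.2
    rw [LinearMap.sum_apply] at this
    rw [LinearMap.sum_apply, AddSubmonoidClass.coe_finsetSum, LinearMap.zero_apply,
      ZeroMemClass.coe_zero, ← this]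
    exact Finset.sum_congr rfl fun i _ => h3 i v
  rw [hN0, zero_add] at hq'
  rintro _ ⟨v, rfl⟩
  refine ⟨aeval (subOneRestrict σ + 1) q v, ?_⟩
  change _ = (subOneRestrict σ ^ (p - 1)) v
  rw [hq']
  simp

/-- If `σ` is an automorphism of prime order `p` of a finitely generated abelian group `U`, the
fixed points of `σ` have no `p`-torsion and every element killed by the norm `1 + σ + ⋯` is of the
form `σ u - u`, then the rank of `U` is at most `p` times the rank of the fixed points. -/
lemma finrank_le_of_ker_norm_le_range [Module.Finite ℤ U] [hp : Fact p.Prime] (hσ : σ ^ p = 1)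
    (htors : ∀ u : U, σ u = u → p • u = 0 → u = 0)
    (hker : LinearMap.ker (∑ i ∈ Finset.range p, σ ^ i) ≤ LinearMap.range (σ - 1)) :
    finrank ℤ U ≤ finrank ℤ (LinearMap.ker (σ - 1)) * p := by
  have hrank := Submodule.finrank_quotient_add_finrank (LinearMap.ker (σ - 1))
  rw [(LinearMap.quotKerEquivRange (σ - 1)).finrank_eq] at hrank
  have hWt : ∀ w : LinearMap.ker (σ - 1), p • w = 0 → w = 0 := fun w hw =>
    Subtype.ext (htors w ((mem_ker_sub_one_iff σ).mp w.2) (by simpa using congrArg Subtype.val hw))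
  have h1 := index_range_subOneRestrict_dvd hσ hker
  rw [index_range_nsmul_of_torsion_trivial p hWt] at h1
  have h4 := (pow_finrank_dvd_index_range_nsmul (W := LinearMap.range (σ - 1)) p).trans
    ((AddSubgroup.index_dvd_of_le (range_subOneRestrict_pow_le hσ)).trans
      ((index_range_pow_dvd _ (p - 1)).trans (pow_dvd_pow_of_dvd h1 (p - 1))))
  rw [← pow_mul, Nat.pow_dvd_pow_iff_le_right hp.out.one_lt] at h4
  have : finrank ℤ (LinearMap.ker (σ - 1)) * p =
      finrank ℤ (LinearMap.ker (σ - 1)) * (p - 1) + finrank ℤ (LinearMap.ker (σ - 1)) := by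
    conv_lhs => rw [← Nat.sub_add_cancel hp.out.one_le]
    ring
  omega

end CyclicAction

/-- If a finite group `G` acts on a commutative ring `B` such that for all `g ≠ 1` the elements
`g • b - b` generate the unit ideal, then every `G`-stable ideal of `B` is generated by its
`G`-invariant elements. -/
lemma Ideal.le_span_invariants {B G : Type*} [CommRing B] [Group G] [Finite G]
    [MulSemiringAction G B]
    (h : ∀ g : G, g ≠ 1 → Ideal.span (Set.range fun b : B => g • b - b) = ⊤)
    (I : Ideal B) (hI : ∀ g : G, ∀ b ∈ I, g • b ∈ I) :
    I ≤ Ideal.span {b | b ∈ I ∧ ∀ g : G, g • b = b} := by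
  classical
  have := Fintype.ofFinite G
  let ev : B →* (G → B) :=
    { toFun := fun b g => g • b
      map_one' := by ext; simp
      map_mul' := fun a b => by ext; simp }
  let S : Subalgebra B (G → B) := Algebra.adjoin B (Set.range ev)
  have hS (φ : G → B) (hφ : φ ∈ S) (b : B) (hb : b ∈ I) :
      ∑ g, φ g * g • b ∈ Ideal.span {b | b ∈ I ∧ ∀ g : G, g • b = b} := by
    have hφ' : φ ∈ Submodule.span B (Set.range ev) := by
      have := Algebra.adjoin_eq_span B (Set.range ev)
      rw [← MonoidHom.coe_mrange, Submonoid.closure_eq] at this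
      rw [← MonoidHom.coe_mrange, ← this]
      exact hφ
    induction hφ' using Submodule.span_induction with
    | mem x hx =>
      obtain ⟨c, rfl⟩ := hx
      apply Ideal.subset_span
      have h1 : ∑ g, ev c g * g • b = ∑ g : G, g • (c * b) := by simp [ev]
      rw [h1]
      refine ⟨Ideal.sum_mem _ fun g _ => hI g _ (I.mul_mem_left c hb), fun k => ?_⟩
      rw [Finset.smul_sum]
      simp_rw [smul_smul]
      exact Fintype.sum_equiv (Equiv.mulLeft k) _ _ fun g => rfl
    | zero => simp
    | add x y hx hy hx' hy' =>
      have hx'' := hx' (by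
        have := Algebra.span_le_adjoin B (Set.range ev); exact this hx)
      have hy'' := hy' (by
        have := Algebra.span_le_adjoin B (Set.range ev); exact this hy)
      simpa [add_mul, Finset.sum_add_distrib] using Ideal.add_mem _ hx'' hy''
    | smul a x hx hx' =>
      have hx'' := hx' (by
        have := Algebra.span_le_adjoin B (Set.range ev); exact this hx)
      simpa [mul_assoc, Finset.mul_sum] using Ideal.mul_mem_left _ a hx''
  have hsep (g : G) (hg : g ≠ 1) : ∃ φ ∈ S, φ 1 = 1 ∧ φ g = 0 := by
    have h1 : (1 : B) ∈ Ideal.span (Set.range fun b : B => g • b - b) := by rw [h g hg]; trivial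
    have h2 (x : B) (hx : x ∈ Ideal.span (Set.range fun b : B => g • b - b)) :
        ∃ φ ∈ S, φ 1 = x ∧ φ g = 0 := by
      induction hx using Submodule.span_induction with
      | mem x hx =>
        obtain ⟨c, rfl⟩ := hx
        refine ⟨algebraMap B (G → B) (g • c) - ev c,
          S.sub_mem (S.algebraMap_mem _) (Algebra.subset_adjoin ⟨c, rfl⟩), ?_, ?_⟩ <;> simp [ev]
      | zero => exact ⟨0, S.zero_mem, rfl, rfl⟩
      | add x y _ _ hx hy =>
        obtain ⟨φ, h1, h2, h3⟩ := hx
        obtain ⟨ψ, h1', h2', h3'⟩ := hy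
        exact ⟨φ + ψ, S.add_mem h1 h1', by simp [h2, h2'], by simp [h3, h3']⟩
      | smul a x _ hx =>
        obtain ⟨φ, h1, h2, h3⟩ := hx
        exact ⟨a • φ, S.smul_mem h1 a, by simp [h2], by simp [h3]⟩
    exact h2 1 h1
  choose! φ hφ using hsep
  intro b hb
  have := hS (∏ g ∈ Finset.univ.erase 1, φ g)
    (S.prod_mem fun g hg => (hφ g (Finset.ne_of_mem_erase hg)).1) b hb
  rw [Finset.sum_eq_single 1] at this
  · rwa [Finset.prod_apply, Finset.prod_eq_one, one_smul, one_mul] at this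
    exact fun g hg => (hφ g (Finset.ne_of_mem_erase hg)).2.1
  · intro g _ hg
    rw [Finset.prod_apply, Finset.prod_eq_zero (f := fun c => φ c g)
      (Finset.mem_erase.mpr ⟨hg, Finset.mem_univ g⟩) (hφ g hg).2.2, zero_mul]
  · simp

section Ambiguous

variable {F N : Type} [Field F] [Field N] [Algebra F N]

/-- The action of a Galois automorphism on the additively written unit group of a number field. -/
noncomputable def unitsGalEnd (g : Gal(N/F)) : Module.End ℤ (Additive (𝓞 N)ˣ) :=
  (MonoidHom.toAdditive
    (Units.map (MulSemiringAction.toRingHom Gal(N/F) (𝓞 N) g : 𝓞 N →* 𝓞 N))).toIntLinearMap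

lemma unitsGalEnd_apply (g : Gal(N/F)) (u : Additive (𝓞 N)ˣ) :
    ((unitsGalEnd g u).toMul : 𝓞 N) = g • (u.toMul : 𝓞 N) := rfl

lemma unitsGalEnd_pow_apply (g : Gal(N/F)) (i : ℕ) (u : Additive (𝓞 N)ˣ) :
    (((unitsGalEnd g ^ i) u).toMul : 𝓞 N) = g ^ i • (u.toMul : 𝓞 N) := by
  induction i with
  | zero => simp
  | succ i ih => rw [pow_succ', Module.End.mul_apply, unitsGalEnd_apply, ih, pow_succ', mul_smul]

variable [NumberField F] [NumberField N] [IsGalois F N]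

lemma smul_algebraMap_ringOfIntegers (g : Gal(N/F)) (a : 𝓞 F) :
    g • algebraMap (𝓞 F) (𝓞 N) a = algebraMap (𝓞 F) (𝓞 N) a := smul_algebraMap g a

lemma prod_pow_smul_eq_norm {p : ℕ} {g : Gal(N/F)} (hg : ∀ x, x ∈ Subgroup.zpowers g)
    (ho : orderOf g = p) (x : 𝓞 N) :
    ∏ i ∈ Finset.range p, g ^ i • x = algebraMap (𝓞 F) (𝓞 N) (RingOfIntegers.norm F x) := by
  subst ho
  apply RingOfIntegers.ext
  rw [RingOfIntegers.coe_algebraMap_norm, Algebra.norm_eq_prod_automorphisms]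
  change algebraMap (𝓞 N) N _ = _
  rw [map_prod, ← Fin.prod_univ_eq_prod_range (fun i => algebraMap (𝓞 N) N (g ^ i • x))]
  let e : Fin (orderOf g) ≃ Gal(N/F) :=
    (finEquivZPowers (isOfFinOrder_of_finite g)).trans
      ((Equiv.setCongr (by ext y; simpa using hg y)).trans (Equiv.Set.univ _))
  exact Fintype.prod_equiv e _ _ fun i => rfl

lemma finrank_ker_unitsGalEnd_le {g : Gal(N/F)} (hg : ∀ x, x ∈ Subgroup.zpowers g) :
    finrank ℤ (LinearMap.ker (unitsGalEnd g - 1)) ≤ Units.rank F := by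
  let ι : Additive (𝓞 F)ˣ →ₗ[ℤ] Additive (𝓞 N)ˣ :=
    (MonoidHom.toAdditive (Units.map (algebraMap (𝓞 F) (𝓞 N) : 𝓞 F →* 𝓞 N))).toIntLinearMap
  rw [← Units.finrank_eq F]
  refine le_trans (Submodule.finrank_mono ?_) (LinearMap.finrank_range_le ι)
  intro u hu
  rw [mem_ker_sub_one_iff] at hu
  have key (x : (𝓞 N)ˣ) (hx : g • (x : 𝓞 N) = x) :
      ∃ a : 𝓞 F, algebraMap (𝓞 F) (𝓞 N) a = x := by
    refine Algebra.IsInvariant.isInvariant (A := 𝓞 F) (G := Gal(N/F)) (x : 𝓞 N) fun k => ?_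
    have : Subgroup.zpowers g ≤ MulAction.stabilizer Gal(N/F) (x : 𝓞 N) := by
      rw [Subgroup.zpowers_le]; exact hx
    exact this (hg k)
  have h0 : g • (u.toMul : 𝓞 N) = (u.toMul : 𝓞 N) := by
    rw [← unitsGalEnd_apply, hu]
  obtain ⟨a, ha⟩ := key u.toMul h0
  obtain ⟨b, hb⟩ := key u.toMul⁻¹ (by
    refine (Units.eq_inv_of_mul_eq_one_right ?_)
    rw [← h0, ← smul_mul', Units.inv_mul, smul_one])
  have hab : a * b = 1 := by
    apply FaithfulSMul.algebraMap_injective (𝓞 F) (𝓞 N)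
    rw [map_mul, ha, hb, map_one, Units.mul_inv]
  refine ⟨Additive.ofMul ⟨a, b, hab, by rw [mul_comm, hab]⟩, ?_⟩
  apply Additive.toMul.injective
  exact Units.ext ha

/-- In a cyclic extension of odd prime degree `p` of a number field without primitive `p`-th roots
of unity there is a unit of relative norm `1` that is not of the form `g v / v` for a unit `v`. -/
lemma exists_unit_norm_eq_one_not_div {p : ℕ} [hp : Fact p.Prime] (hodd : Odd p)
    (hdeg : finrank F N = p) (htors : ∀ x : 𝓞 F, x ^ p = 1 → x = 1)
    {g : Gal(N/F)} (hg : ∀ x, x ∈ Subgroup.zpowers g) :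
    ∃ u : (𝓞 N)ˣ, RingOfIntegers.norm F (u : 𝓞 N) = 1 ∧
      ∀ v : (𝓞 N)ˣ, (u : 𝓞 N) * g • (v : 𝓞 N) ≠ v := by
  have ho : orderOf g = p := by
    rw [orderOf_eq_card_of_forall_mem_zpowers hg, IsGalois.card_aut_eq_finrank, hdeg]
  by_contra! hcon
  have hσ : unitsGalEnd g ^ p = 1 := by
    refine LinearMap.ext fun u => Additive.toMul.injective (Units.ext ?_)
    rw [unitsGalEnd_pow_apply, ← ho, pow_orderOf_eq_one, one_smul]
    rfl
  have hprod (u : Additive (𝓞 N)ˣ) :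
      ((((∑ i ∈ Finset.range p, unitsGalEnd g ^ i) u).toMul : (𝓞 N)ˣ) : 𝓞 N) =
        algebraMap (𝓞 F) (𝓞 N) (RingOfIntegers.norm F (u.toMul : 𝓞 N)) := by
    rw [← prod_pow_smul_eq_norm hg ho, LinearMap.sum_apply, toMul_sum, Units.coe_prod]
    exact Finset.prod_congr rfl fun i _ => unitsGalEnd_pow_apply g i u
  have hle := finrank_le_of_ker_norm_le_range hσ (U := Additive (𝓞 N)ˣ) (p := p) ?_ ?_
  · have := IsUnramifiedAtInfinitePlaces_of_odd_finrank (k := F) (K := N) (by rwa [hdeg])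
    have hcard := IsUnramifiedAtInfinitePlaces.card_infinitePlace F N
    have hker := finrank_ker_unitsGalEnd_le hg
    rw [Units.finrank_eq, Units.rank, hcard, hdeg] at hle
    rw [Units.rank] at hker
    have hpos : 0 < Fintype.card (InfinitePlace F) := Fintype.card_pos
    have h2 := hp.out.two_le
    have h3 := hle.trans (Nat.mul_le_mul_right p hker)
    rw [Nat.sub_mul, one_mul] at h3
    have h4 : p ≤ Fintype.card (InfinitePlace F) * p := Nat.le_mul_of_pos_left p hpos
    omega
  · intro u hu hpu
    have h0 : g • (u.toMul : 𝓞 N) = (u.toMul : 𝓞 N) := by rw [← unitsGalEnd_apply, hu]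
    obtain ⟨a, ha⟩ := Algebra.IsInvariant.isInvariant (A := 𝓞 F) (G := Gal(N/F)) (u.toMul : 𝓞 N)
      fun k => by
        have : Subgroup.zpowers g ≤ MulAction.stabilizer Gal(N/F) (u.toMul : 𝓞 N) := by
          rw [Subgroup.zpowers_le]; exact h0
        exact this (hg k)
    have hu1 : ((u.toMul : (𝓞 N)ˣ) : 𝓞 N) ^ p = 1 := by
      have := congrArg (fun x : Additive (𝓞 N)ˣ => ((x.toMul : (𝓞 N)ˣ) : 𝓞 N)) hpu
      simpa using this
    have ha1 : a = 1 := htors a (by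
      apply FaithfulSMul.algebraMap_injective (𝓞 F) (𝓞 N)
      rw [map_pow, ha, hu1, map_one])
    apply Additive.toMul.injective
    apply Units.ext
    rw [← ha, ha1, map_one]
    rfl
  · intro u hu
    rw [LinearMap.mem_ker] at hu
    have hn := hprod u
    rw [hu] at hn
    obtain ⟨v, hv⟩ := hcon u.toMul (by
      apply FaithfulSMul.algebraMap_injective (𝓞 F) (𝓞 N)
      rw [← hn, map_one]; rfl)
    refine ⟨-Additive.ofMul v, ?_⟩
    rw [LinearMap.sub_apply, map_neg, Module.End.one_apply, sub_neg_eq_add, neg_add_eq_iff_eq_add]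
    apply Additive.toMul.injective
    apply Units.ext
    rw [toMul_add, Units.val_mul, unitsGalEnd_apply, mul_comm]
    exact hv.symm

/-- If every Galois-stable ideal of a cyclic extension `N / F` of odd prime degree `p` is extended
from `F` and `F` contains no primitive `p`-th root of unity, then `p` divides the class number
of `F`. -/
theorem prime_dvd_classNumber_of_invariant_ideals {p : ℕ} [hp : Fact p.Prime] (hodd : Odd p)
    (hdeg : finrank F N = p) (htors : ∀ x : 𝓞 F, x ^ p = 1 → x = 1)
    (hinv : ∀ I : Ideal (𝓞 N), (∀ g : Gal(N/F), ∀ b ∈ I, g • b ∈ I) →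
      ∃ J : Ideal (𝓞 F), J.map (algebraMap (𝓞 F) (𝓞 N)) = I) :
    p ∣ classNumber F := by
  have hc : Nat.card Gal(N/F) = p := by rw [IsGalois.card_aut_eq_finrank, hdeg]
  have : IsCyclic Gal(N/F) := isCyclic_of_prime_card hc
  obtain ⟨g, hg⟩ := IsCyclic.exists_generator (α := Gal(N/F))
  have ho : orderOf g = p := by rw [orderOf_eq_card_of_forall_mem_zpowers hg, hc]
  obtain ⟨u, hu, hv⟩ := exists_unit_norm_eq_one_not_div hodd hdeg htors hg
  obtain ⟨ε, hε0, hε⟩ := groupCohomology.exists_mul_galRestrict_of_norm_eq_one (A := 𝓞 F)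
    (K := F) (L := N) (B := 𝓞 N) hg (η := (u : 𝓞 N)) (by
      have := congrArg (algebraMap (𝓞 F) F) hu
      rwa [map_one] at this)
  have hgal : galRestrict (𝓞 F) F N (𝓞 N) g ε = g • ε := by
    apply RingOfIntegers.ext
    exact algebraMap_galRestrict_apply (𝓞 F) g ε
  rw [hgal] at hε
  have hassoc (k : Gal(N/F)) : Associated (k • ε) ε := by
    have h1 : Associated (g • ε) ε := ⟨u, by rw [mul_comm, hε]⟩
    let S : Subgroup Gal(N/F) :=
      { carrier := {k | Associated (k • ε) ε}
        one_mem' := by simp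
        mul_mem' := fun {a b} ha hb => by
          rw [Set.mem_ofPred_eq, mul_smul]
          exact (hb.map (MulSemiringAction.toRingHom Gal(N/F) (𝓞 N) a)).trans ha
        inv_mem' := fun {a} ha => by
          have := ha.map (MulSemiringAction.toRingHom Gal(N/F) (𝓞 N) a⁻¹)
          simp only [MulSemiringAction.toRingHom_apply, inv_smul_smul] at this
          exact this.symm }
    have : Subgroup.zpowers g ≤ S := by rw [Subgroup.zpowers_le]; exact h1
    exact this (hg k)
  obtain ⟨J, hJ⟩ := hinv (Ideal.span {ε}) (by
    intro k b hb
    rw [Ideal.mem_span_singleton] at hb ⊢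
    obtain ⟨c, rfl⟩ := hb
    rw [smul_mul']
    exact (hassoc k).symm.dvd.mul_right _)
  have hJ0 : J ≠ ⊥ := by
    rintro rfl
    rw [Ideal.map_bot, eq_comm, Ideal.span_singleton_eq_bot] at hJ
    exact hε0 hJ
  have hJp : J ^ p = Ideal.span {RingOfIntegers.norm F ε} := by
    apply Ideal.map_injective_of_faithfullyFlat (A := 𝓞 F) (B := 𝓞 N)
    rw [Ideal.map_pow, hJ, Ideal.map_span, Set.image_singleton, Ideal.span_singleton_pow,
      Ideal.span_singleton_eq_span_singleton, ← prod_pow_smul_eq_norm hg ho,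
      ← Finset.card_range p, ← Finset.prod_const, Finset.card_range]
    exact Associated.prod _ _ _ fun i _ => (hassoc _).symm
  by_contra hndvd
  have hJmem : J ∈ nonZeroDivisors (Ideal (𝓞 F)) := mem_nonZeroDivisors_of_ne_zero hJ0
  have hone : ClassGroup.mk0 ⟨J, hJmem⟩ = 1 := by
    have h1 : ClassGroup.mk0 ⟨J, hJmem⟩ ^ p = 1 := by
      rw [← map_pow]
      have : (⟨J, hJmem⟩ : nonZeroDivisors (Ideal (𝓞 F))) ^ p =
        ⟨J ^ p, pow_mem hJmem p⟩ := rfl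
      rw [this, ClassGroup.mk0_eq_one_iff, hJp]
      exact ⟨_, rfl⟩
    have h2 : ClassGroup.mk0 ⟨J, hJmem⟩ ^ classNumber F = 1 := pow_card_eq_one
    have h3 := pow_gcd_eq_one.mpr ⟨h1, h2⟩
    rwa [(hp.out.coprime_iff_not_dvd.mpr hndvd).gcd_eq_one, pow_one] at h3
  rw [ClassGroup.mk0_eq_one_iff] at hone
  obtain ⟨a, rfl⟩ := hone
  rw [← Ideal.span, Ideal.map_span, Set.image_singleton,
    Ideal.span_singleton_eq_span_singleton] at hJ
  obtain ⟨v, rfl⟩ := hJ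
  refine hv v ?_
  rw [smul_mul', smul_algebraMap_ringOfIntegers, mul_left_comm] at hε
  exact mul_left_cancel₀ (fun h => hε0 (by rw [h, zero_mul])) hε

end Ambiguous

/-- If `H / F` is a Galois extension of number fields such that for every `g ≠ 1` in the Galois
group the elements `g b - b` generate the unit ideal, `F` contains no primitive `p`-th root of
unity, and the Galois group has a normal subgroup of odd prime index `p`, then `p` divides the class
number of `F`. -/
theorem prime_dvd_classNumber_of_normal_index {F H : Type} [Field F] [NumberField F] [Field H]
    [NumberField H] [Algebra F H] [IsGalois F H] {p : ℕ} [hp : Fact p.Prime] (hodd : Odd p)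
    (C : Subgroup Gal(H/F)) [C.Normal] (hC : C.index = p)
    (htors : ∀ x : 𝓞 F, x ^ p = 1 → x = 1)
    (hram : ∀ g : Gal(H/F), g ≠ 1 → Ideal.span (Set.range fun b : 𝓞 H => g • b - b) = ⊤) :
    p ∣ classNumber F := by
  let N := IntermediateField.fixedField C
  have : IsGalois F N := IsGalois.of_fixedField_normal_subgroup C
  have hdeg : finrank F N = p := by
    rw [IntermediateField.finrank_eq_fixingSubgroup_index,
      IntermediateField.fixingSubgroup_fixedField, hC]
  have : NumberField N := NumberField.of_intermediateField N
  refine prime_dvd_classNumber_of_invariant_ideals (N := N) hodd hdeg htors fun I hI => ?_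
  have hI' (g : Gal(H/F)) (b : 𝓞 H) (hb : b ∈ I.map (algebraMap (𝓞 N) (𝓞 H))) :
      g • b ∈ I.map (algebraMap (𝓞 N) (𝓞 H)) := by
    induction hb using Submodule.span_induction with
    | mem x hx =>
      obtain ⟨c, hc, rfl⟩ := hx
      have : g • algebraMap (𝓞 N) (𝓞 H) c =
          algebraMap (𝓞 N) (𝓞 H) ((g.restrictNormal N) • c) := by
        apply RingOfIntegers.ext
        exact (AlgEquiv.restrictNormal_commutes g N (c : N)).symm
      rw [this]
      exact Ideal.mem_map_of_mem _ (hI _ _ hc)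
    | zero => simp
    | add x y _ _ hx hy => rw [smul_add]; exact Ideal.add_mem _ hx hy
    | smul a x _ hx => rw [smul_eq_mul, smul_mul']; exact Ideal.mul_mem_left _ _ hx
  refine ⟨(I.map (algebraMap (𝓞 N) (𝓞 H))).comap (algebraMap (𝓞 F) (𝓞 H)), ?_⟩
  apply Ideal.map_injective_of_faithfullyFlat (A := 𝓞 N) (B := 𝓞 H)
  rw [Ideal.map_map, ← IsScalarTower.algebraMap_eq]
  refine le_antisymm Ideal.map_comap_le ((Ideal.le_span_invariants hram _ hI').trans ?_)
  rw [Ideal.span_le]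
  rintro b ⟨hb, hfix⟩
  obtain ⟨a, rfl⟩ := Algebra.IsInvariant.isInvariant (A := 𝓞 F) (G := Gal(H/F)) b hfix
  exact Ideal.mem_map_of_mem _ hb

/-- In an integrally closed domain, `(ζ - 1) ^ n ∣ θ ^ n - 1` forces `ζ - 1 ∣ θ - 1` for a primitive
`n`-th root of unity `ζ`. -/
theorem IsPrimitiveRoot.sub_one_dvd_sub_one {R : Type*} [CommRing R] [IsDomain R]
    [IsIntegrallyClosed R] {n : ℕ} (hn : 1 < n) {ζ θ : R} (hζ : IsPrimitiveRoot ζ n)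
    (h : (ζ - 1) ^ n ∣ θ ^ n - 1) : ζ - 1 ∣ θ - 1 := by
  obtain ⟨e, he⟩ := h
  have : NeZero n := ⟨by omega⟩
  have hc (z : R) (hz : z ∈ nthRootsFinset n (1 : R)) : ∃ c, 1 - z = (ζ - 1) * c := by
    rw [Polynomial.mem_nthRootsFinset (by omega)] at hz
    obtain ⟨i, -, rfl⟩ := hζ.eq_pow_of_pow_eq_one hz
    exact dvd_sub_comm.mp (by simpa using sub_dvd_pow_sub_pow ζ 1 i)
  choose! c hc using hc
  have hne : algebraMap R (FractionRing R) (ζ - 1) ≠ 0 := by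
    rw [Ne, FaithfulSMul.algebraMap_eq_zero_iff, sub_eq_zero]
    exact hζ.ne_one hn
  set x : FractionRing R := algebraMap R _ (θ - 1) / algebraMap R _ (ζ - 1) with hx
  have hmul : algebraMap R _ (ζ - 1) * x = algebraMap R _ (θ - 1) := mul_div_cancel₀ _ hne
  have hcard : (nthRootsFinset n (1 : R)).card = n := hζ.card_nthRootsFinset
  have hxint : IsIntegral R x := by
    refine ⟨∏ z ∈ nthRootsFinset n (1 : R), (X + C (c z)) - C e, ?_, ?_⟩
    · refine (monic_prod_of_monic _ _ fun z _ => monic_X_add_C _).sub_of_left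
        (degree_C_le.trans_lt ?_)
      rw [degree_prod]
      simp only [degree_X_add_C, Finset.sum_const, hcard, nsmul_eq_mul, mul_one]
      exact_mod_cast (by omega : 0 < n)
    · rw [eval₂_sub, eval₂_finsetProd, eval₂_C, sub_eq_zero]
      have h1 := congrArg (fun P : R[X] => algebraMap R (FractionRing R) (P.eval θ))
        (X_pow_sub_one_eq_prod (by omega) hζ)
      simp only [eval_sub, eval_pow, eval_X, eval_one, he, eval_prod, eval_C, map_prod,
        map_mul (algebraMap R _), map_pow] at h1
      refine mul_left_cancel₀ (pow_ne_zero n hne) (Eq.trans ?_ h1.symm)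
      have h2 : algebraMap R (FractionRing R) (ζ - 1) ^ n =
        ∏ z ∈ nthRootsFinset n (1 : R), algebraMap R (FractionRing R) (ζ - 1) := by
        rw [Finset.prod_const, hcard]
      rw [h2, ← Finset.prod_mul_distrib]
      refine Finset.prod_congr rfl fun z hz => ?_
      rw [eval₂_add, eval₂_X, eval₂_C, mul_add, hmul, ← map_mul, ← hc z hz, ← map_add]
      congr 1
      ring
  obtain ⟨y, hy⟩ := IsIntegrallyClosed.isIntegral_iff.mp hxint
  refine ⟨y, FaithfulSMul.algebraMap_injective R (FractionRing R) ?_⟩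
  rw [map_mul, hy, hmul]

theorem IsPrimitiveRoot.sub_one_pow_dvd_natCast {R : Type*} [CommRing R] [IsDomain R] {k n : ℕ}
    (hk : k < n) {ζ : R} (hζ : IsPrimitiveRoot ζ n) : (ζ - 1) ^ k ∣ (n : R) := by
  obtain ⟨z, -, hz⟩ := hζ.self_sub_one_pow_dvd_order hk
  exact ⟨z, by rw [hz, mul_comm]⟩

/-- If `g` fixes a primitive `p`-th root of unity and multiplies `θ` by a nontrivial `p`-th root of
unity, where the unit `θ` satisfies `θ ^ p ≡ 1` modulo `p ^ 2`, then the elements `g b - b` generate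
the unit ideal. -/
theorem span_smul_sub_eq_top_of_kummer {F H : Type*} [Field F] [Field H] [NumberField H]
    [Algebra F H] {p : ℕ} (hp : p.Prime) {ζ θ : 𝓞 H} (hζ : IsPrimitiveRoot ζ p) (hθ : IsUnit θ)
    (hpθ : (p : 𝓞 H) ^ 2 ∣ θ ^ p - 1) (g : Gal(H/F)) (hgζ : g • ζ = ζ) {k : ℕ}
    (hgθ : g • θ = ζ ^ k * θ) (hk : ¬ p ∣ k) :
    Ideal.span (Set.range fun b : 𝓞 H => g • b - b) = ⊤ := by
  have h1 : (ζ - 1) ^ p ∣ θ ^ p - 1 := by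
    refine dvd_trans ?_ hpθ
    refine dvd_trans ?_ (pow_dvd_pow_of_dvd
      (hζ.sub_one_pow_dvd_natCast (Nat.sub_lt hp.pos one_pos)) 2)
    rw [← pow_mul]
    exact pow_dvd_pow _ (by have := hp.two_le; omega)
  obtain ⟨x, hx⟩ := hζ.sub_one_dvd_sub_one hp.one_lt h1
  have hne : ζ - 1 ≠ 0 := sub_ne_zero.mpr (hζ.ne_one hp.one_lt)
  obtain ⟨u, hu⟩ := hζ.associated_sub_one_pow_sub_one_of_coprime
    ((Nat.Prime.coprime_iff_not_dvd hp).mpr hk).symm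
  have h2 : g • x - x = u * θ := by
    have h3 : g • ((ζ - 1) * x) = (ζ - 1) * (g • x) := by
      rw [smul_mul', smul_sub, hgζ, smul_one]
    have h4 : g • (θ - 1) = ζ ^ k * θ - 1 := by rw [smul_sub, hgθ, smul_one]
    apply mul_left_cancel₀ hne
    rw [mul_sub, ← h3, ← hx, h4, ← mul_assoc, hu]
    ring
  refine Ideal.eq_top_of_isUnit_mem _ (Ideal.subset_span ⟨x, rfl⟩) ?_
  rw [show (fun b : 𝓞 H => g • b - b) x = u * θ from h2]
  exact u.isUnit.mul hθ

/-- If `g` inverts a primitive `p`-th root of unity and negates a square root of `M`, where `p` is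
prime to `2 * M`, then the elements `g b - b` generate the unit ideal. -/
theorem span_smul_sub_eq_top_of_inv {F H : Type*} [Field F] [Field H] [NumberField H]
    [Algebra F H] {p : ℕ} (hp : p.Prime) (hp2 : p ≠ 2) {M : ℤ} (hM : IsCoprime (p : ℤ) (4 * M))
    {ζ d : 𝓞 H} (hζ : IsPrimitiveRoot ζ p)
    (hd : d ^ 2 = M) (g : Gal(H/F)) (hgζ : (g • ζ) * ζ = 1) (hgd : g • d = -d) :
    Ideal.span (Set.range fun b : 𝓞 H => g • b - b) = ⊤ := by
  set I := Ideal.span (Set.range fun b : 𝓞 H => g • b - b)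
  have h1 : (p : 𝓞 H) ∈ I := by
    have h2 : ζ ^ 2 - 1 ∈ I := by
      have : ζ ^ 2 - 1 = (-ζ) * (g • ζ - ζ) := by linear_combination hgζ
      rw [this]
      exact Ideal.mul_mem_left _ _ (Ideal.subset_span ⟨ζ, rfl⟩)
    have h3 : IsPrimitiveRoot (ζ ^ 2) p :=
      hζ.pow_of_coprime 2 ((Nat.coprime_primes Nat.prime_two hp).mpr hp2.symm)
    have h4 := h3.sub_one_pow_dvd_natCast hp.one_lt
    rw [pow_one] at h4
    exact Ideal.mem_of_dvd _ h4 h2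
  have h2 : ((4 * M : ℤ) : 𝓞 H) ∈ I := by
    have : ((4 * M : ℤ) : 𝓞 H) = (-2 * d) * (g • d - d) := by
      rw [hgd]; push_cast; linear_combination -4 * hd
    rw [this]
    exact Ideal.mul_mem_left _ _ (Ideal.subset_span ⟨d, rfl⟩)
  obtain ⟨a, b, hab⟩ := hM
  rw [Ideal.eq_top_iff_one]
  have := I.add_mem (I.mul_mem_left (a : 𝓞 H) h1) (I.mul_mem_left (b : 𝓞 H) h2)
  convert! this
  exact_mod_cast hab.symm

/-- A finite group with commuting elements and order `p` or `2 * p` has a normal subgroup of index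
`p`. -/
theorem exists_normal_index_eq_prime {G : Type*} [Group G] [Finite G]
    (hcomm : ∀ g h : G, g * h = h * g) {p : ℕ} (hp : p.Prime) (hdvd : p ∣ Nat.card G)
    (hle : Nat.card G ≤ 2 * p) : ∃ C : Subgroup G, C.Normal ∧ C.index = p := by
  have hnormal (C : Subgroup G) : C.Normal :=
    ⟨fun n hn g => by rwa [hcomm g n, mul_assoc, mul_inv_cancel, mul_one]⟩
  obtain ⟨m, hm⟩ := hdvd
  have hpos : 0 < Nat.card G := Nat.card_pos
  have hm2 : m ≤ 2 := by
    rw [hm, mul_comm] at hle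
    exact Nat.le_of_mul_le_mul_right hle hp.pos
  have hm0 : m ≠ 0 := by rintro rfl; omega
  obtain rfl | rfl : m = 1 ∨ m = 2 := by omega
  · exact ⟨⊥, hnormal _, by rw [Subgroup.index_bot, hm, mul_one]⟩
  · have := Fact.mk Nat.prime_two
    obtain ⟨c, hc⟩ := exists_prime_orderOf_dvd_card' (G := G) 2 ⟨p, by rw [hm, mul_comm]⟩
    refine ⟨Subgroup.zpowers c, hnormal _, ?_⟩
    have h := (Subgroup.zpowers c).card_mul_index
    rw [Nat.card_zpowers, hc, hm, mul_comm p] at h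
    exact Nat.eq_of_mul_eq_mul_left two_pos h

theorem isCoprime_of_mul_sq_eq {p : ℕ} (hp : p.Prime) (hp5 : 5 ≤ p) {s t M r : ℤ}
    (hs : s = -1 ∨ s = 1) (heq : (p : ℤ) ^ 4 * t ^ 2 - 4 * s = M * r ^ 2) :
    IsCoprime (p : ℤ) (4 * M) := by
  have hpZ : Prime (p : ℤ) := Nat.prime_iff_prime_int.mp hp
  have h4 : ¬ (p : ℤ) ∣ 4 := fun h => by
    have := Int.le_of_dvd (by norm_num) h
    omega
  rw [hpZ.coprime_iff_not_dvd]
  intro h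
  rcases hpZ.dvd_or_dvd h with h | h
  · exact h4 h
  · have h1 : (p : ℤ) ∣ 4 * s := by
      have : 4 * s = p * (p ^ 3 * t ^ 2) - M * r ^ 2 := by rw [← heq]; ring
      rw [this]
      exact dvd_sub (dvd_mul_right _ _) (h.mul_right _)
    rcases hs with rfl | rfl
    · exact h4 (by simpa using h1)
    · exact h4 (by simpa using h1)

section Mirror

variable {F H : Type} [Field F] [Field H] [CharZero H] [Algebra F H] {p : ℕ} {s t M r : ℤ}
  {ζ d θ : H}

/-- The action of the Galois group on the generators of the extension `H / F`. -/
theorem exists_zpow_of_mirror (hp : p.Prime) (hp5 : 5 ≤ p) (hs : s = -1 ∨ s = 1) (hM : M ≠ 0)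
    (heq : (p : ℤ) ^ 4 * t ^ 2 - 4 * s = M * r ^ 2)
    (hζ : IsPrimitiveRoot ζ p) (hd : d ^ 2 = M)
    (hw : ∃ a : F, algebraMap F H a = (ζ - ζ⁻¹) * d)
    (hθ : θ ^ p = -s * (((p : H) ^ 2 * t + r * d) / 2) ^ 2) (g : Gal(H/F)) :
    ∃ ε : ℤ, (ε = 1 ∨ ε = -1) ∧ g ζ = ζ ^ ε ∧ g d = ε * d ∧ ∃ k < p, g θ = ζ ^ k * θ ^ ε := by
  have : NeZero p := ⟨hp.ne_zero⟩
  have hodd : Odd p := hp.odd_of_ne_two (by omega)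
  have hζ0 : ζ ≠ 0 := hζ.ne_zero hp.ne_zero
  have hM' : (M : H) ≠ 0 := by exact_mod_cast hM
  have hd0 : d ≠ 0 := by rintro rfl; exact hM' (by rw [← hd]; simp)
  have hs2 : (s : H) ^ 2 = 1 := by rcases hs with rfl | rfl <;> simp
  have hgz : (g ζ) ^ p = 1 := by rw [← map_pow, hζ.pow_eq_one, map_one]
  have hgζ0 : g ζ ≠ 0 := by simpa using hζ0
  have hgd : g d = d ∨ g d = -d := by
    rw [← sq_eq_sq_iff_eq_or_eq_neg, ← map_pow, hd, map_intCast]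
  have hgw : (g ζ - (g ζ)⁻¹) * g d = (ζ - ζ⁻¹) * d := by
    obtain ⟨a, ha⟩ := hw
    rw [← ha, ← g.commutes a, ha, map_mul, map_sub, map_inv₀]
  have hne {z : H} (hz : z ^ p = 1) : z ≠ -1 := by
    rintro rfl
    rw [hodd.neg_one_pow] at hz
    norm_num at hz
  have heqH : (p : H) ^ 4 * t ^ 2 - 4 * s = M * r ^ 2 := by exact_mod_cast heq
  have hEE : (((p : H) ^ 2 * t + r * d) / 2) * (((p : H) ^ 2 * t - r * d) / 2) = s := by
    linear_combination heqH / 4 - r ^ 2 * hd / 4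
  have hs0 : (s : H) ≠ 0 := by rintro h; rw [h] at hs2; simp at hs2
  have hE0 : ((p : H) ^ 2 * t + r * d) / 2 ≠ 0 := by
    rintro h; rw [h, zero_mul] at hEE; exact hs0 hEE.symm
  have hθ0 : θ ≠ 0 := by
    rintro rfl
    rw [zero_pow hp.ne_zero] at hθ
    exact mul_ne_zero (neg_ne_zero.mpr hs0) (pow_ne_zero 2 hE0) hθ.symm
  have hgθ : (g θ) ^ p = -s * (((p : H) ^ 2 * t + r * g d) / 2) ^ 2 := by
    rw [← map_pow, hθ]
    simp only [map_mul, map_neg, map_pow, map_div₀, map_add, map_intCast, map_natCast,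
      map_ofNat]
  have key {ε : ℤ} (h : (g θ) ^ p = (θ ^ ε) ^ p) : ∃ k < p, g θ = ζ ^ k * θ ^ ε := by
    have h0 : θ ^ ε ≠ 0 := zpow_ne_zero _ hθ0
    have : (g θ / θ ^ ε) ^ p = 1 := by rw [div_pow, h, div_self (pow_ne_zero _ h0)]
    obtain ⟨k, hk, h⟩ := hζ.eq_pow_of_pow_eq_one this
    exact ⟨k, hk, by rw [h, div_mul_cancel₀ _ h0]⟩
  rcases hgd with hgd | hgd
  · refine ⟨1, Or.inl rfl, ?_, by simp [hgd], key (by rw [zpow_one, hgθ, hθ, hgd])⟩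
    rw [hgd] at hgw
    have h1 := mul_right_cancel₀ hd0 hgw
    have h2 : (g ζ - ζ) * (g ζ * ζ + 1) = 0 := by
      field_simp at h1
      linear_combination h1
    rcases mul_eq_zero.mp h2 with h | h
    · rw [zpow_one]; exact sub_eq_zero.mp h
    · exact absurd (eq_neg_of_add_eq_zero_left h) (hne (by rw [mul_pow, hgz, hζ.pow_eq_one, one_mul]))
  · refine ⟨-1, Or.inr rfl, ?_, by simp [hgd], key ?_⟩
    · rw [hgd] at hgw
      have h1 : g ζ - (g ζ)⁻¹ = -(ζ - ζ⁻¹) := mul_right_cancel₀ hd0 (by linear_combination -hgw)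
      have h2 : (g ζ * ζ - 1) * (g ζ * ζ⁻¹ + 1) = 0 := by
        field_simp at h1 ⊢
        linear_combination h1
      rcases mul_eq_zero.mp h2 with h | h
      · rw [zpow_neg_one]; exact eq_inv_of_mul_eq_one_left (sub_eq_zero.mp h)
      · exact absurd (eq_neg_of_add_eq_zero_left h)
          (hne (by rw [mul_pow, hgz, inv_pow, hζ.pow_eq_one, inv_one, one_mul]))
    · rw [zpow_neg_one, inv_pow, hgθ, hθ, hgd]
      apply eq_inv_of_mul_eq_one_left
      linear_combination (s ^ 2 * ((((p : H) ^ 2 * t + r * d) / 2) *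
        (((p : H) ^ 2 * t - r * d) / 2) + s)) * hEE + (s ^ 2 + 1) * hs2

/-- The class number criterion for a Galois extension `H = F(ζ, θ)` with the Galois action described
in `exists_zpow_of_mirror`. -/
theorem prime_dvd_classNumber_of_mirror [NumberField F] [NumberField H] [IsGalois F H]
    (hp : p.Prime) (hp5 : 5 ≤ p) (hs : s = -1 ∨ s = 1) (hM : M ≠ 0)
    (heq : (p : ℤ) ^ 4 * t ^ 2 - 4 * s = M * r ^ 2)
    (hζ : IsPrimitiveRoot ζ p) (hd : d ^ 2 = M)
    (hw : ∃ a : F, algebraMap F H a = (ζ - ζ⁻¹) * d)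
    (hθ : θ ^ p = -s * (((p : H) ^ 2 * t + r * d) / 2) ^ 2)
    (hgen : ∀ g : Gal(H/F), g ζ = ζ → g θ = θ → g = 1)
    (hdeg : p ∣ finrank F H)
    (htors : ∀ x : 𝓞 F, x ^ p = 1 → x = 1) : p ∣ classNumber F := by
  have : NeZero p := ⟨hp.ne_zero⟩
  have : Fact p.Prime := ⟨hp⟩
  have hodd : Odd p := hp.odd_of_ne_two (by omega)
  have hact := exists_zpow_of_mirror hp hp5 hs hM heq hζ hd hw hθ
  have hext (g h : Gal(H/F)) (h1 : g ζ = h ζ) (h2 : g θ = h θ) : g = h := by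
    have := hgen (h⁻¹ * g) (by rw [AlgEquiv.mul_apply, h1, ← AlgEquiv.mul_apply]; simp)
      (by rw [AlgEquiv.mul_apply, h2, ← AlgEquiv.mul_apply]; simp)
    exact (inv_mul_eq_one.mp this).symm
  have hcomm (g h : Gal(H/F)) : g * h = h * g := by
    obtain ⟨ε, -, h1, -, k, -, h2⟩ := hact g
    obtain ⟨δ, -, h3, -, l, -, h4⟩ := hact h
    apply hext
    · simp only [AlgEquiv.mul_apply, h1, h3, map_zpow₀, ← zpow_mul, mul_comm]
    · simp only [AlgEquiv.mul_apply, h1, h2, h3, h4, map_zpow₀, map_mul, mul_zpow,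
        ← zpow_mul, ← zpow_natCast]
      rw [mul_comm δ ε, mul_comm (l : ℤ), mul_comm (k : ℤ)]
      ring
  have hcard : Nat.card Gal(H/F) ≤ 2 * p := by
    choose ε hε h1 h2 k hk h3 using hact
    have hinj : Function.Injective
        fun g : Gal(H/F) => ((decide (ε g = 1), ⟨k g, hk g⟩) : Bool × Fin p) := by
      intro g h hgh
      simp only [Prod.mk.injEq, decide_eq_decide, Fin.mk.injEq] at hgh
      have he : ε g = ε h := by
        have := hgh.1
        have := hε g
        have := hε h
        omega
      exact hext _ _ (by rw [h1, h1, he]) (by rw [h3, h3, he, hgh.2])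
    simpa using Nat.card_le_card_of_injective _ hinj
  obtain ⟨N, hN, hNi⟩ := exists_normal_index_eq_prime hcomm hp
    (by rwa [IsGalois.card_aut_eq_finrank]) hcard
  refine prime_dvd_classNumber_of_normal_index hodd N hNi htors fun g hg => ?_
  have hs2 : (s : H) ^ 2 = 1 := by rcases hs with rfl | rfl <;> simp
  have heqH : (p : H) ^ 4 * t ^ 2 - 4 * s = M * r ^ 2 := by exact_mod_cast heq
  set E : H := ((p : H) ^ 2 * t + r * d) / 2 with hE
  have hEq : E ^ 2 = p ^ 2 * t * E - s := by
    linear_combination (r ^ 2 * hd - heqH) / 4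
  have hEint : IsIntegral ℤ E := by
    refine ⟨X ^ 2 - C ((p : ℤ) ^ 2 * t) * X + C s, ?_, ?_⟩
    · monicity!
    · rw [eval₂_add, eval₂_sub, eval₂_mul, eval₂_pow, eval₂_X, eval₂_C, eval₂_C, eq_intCast,
        eq_intCast]
      push_cast
      linear_combination hEq
  have hdint : IsIntegral ℤ d := .of_pow two_pos (by rw [hd]; exact isIntegral_algebraMap (x := M))
  have hθint : IsIntegral ℤ θ := by
    refine .of_pow hp.pos ?_
    rw [hθ]
    exact (isIntegral_algebraMap (x := s)).neg.mul (hEint.pow 2)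
  obtain ⟨θ', hcθ⟩ : ∃ θ' : 𝓞 H, algebraMap (𝓞 H) H θ' = θ := ⟨⟨θ, hθint⟩, rfl⟩
  obtain ⟨d', hcd⟩ : ∃ d' : 𝓞 H, algebraMap (𝓞 H) H d' = d := ⟨⟨d, hdint⟩, rfl⟩
  obtain ⟨E', hcE⟩ : ∃ E' : 𝓞 H, algebraMap (𝓞 H) H E' = E := ⟨⟨E, hEint⟩, rfl⟩
  obtain ⟨ζ', hcζ, hζ'⟩ : ∃ ζ' : 𝓞 H, algebraMap (𝓞 H) H ζ' = ζ ∧ IsPrimitiveRoot ζ' p :=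
    ⟨hζ.toInteger, rfl, hζ.toInteger_isPrimitiveRoot⟩
  have hsmul (b : 𝓞 H) : algebraMap (𝓞 H) H (g • b) = g (algebraMap (𝓞 H) H b) := rfl
  have hinj : Function.Injective (algebraMap (𝓞 H) H) := FaithfulSMul.algebraMap_injective _ _
  have hE' : E' ^ 2 = p ^ 2 * t * E' - s := hinj (by simpa [hcE] using hEq)
  have hs2' : (s : 𝓞 H) ^ 2 = 1 := by rcases hs with rfl | rfl <;> simp
  have hθ' : θ' ^ p = -s * E' ^ 2 := hinj (by simpa [hcE, hcθ] using hθ)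
  obtain ⟨ε, rfl | rfl, h1, h2, k, hk, h3⟩ := hact g
  · refine span_smul_sub_eq_top_of_kummer hp hζ' (θ := θ') ?_ ?_ g (hinj ?_) (k := k)
      (hinj ?_) ?_
    · rw [← isUnit_pow_iff hp.ne_zero, hθ']
      refine .of_mul_eq_one (-s * (p ^ 2 * t - E') ^ 2) ?_
      linear_combination (-(E' * (p ^ 2 * t - E') + s) * s ^ 2) * hE' + (s ^ 2 + 1) * hs2'
    · exact ⟨-s * t * E', by linear_combination hθ' - s * hE' + hs2'⟩
    · rw [hsmul, hcζ, h1, zpow_one]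
    · rw [hsmul, map_mul, map_pow, hcθ, hcζ]; simpa using h3
    · intro hpk
      have := Nat.eq_zero_of_dvd_of_lt hpk hk
      refine hg (hgen g (by simpa using h1) (by simpa [this] using h3))
  · refine span_smul_sub_eq_top_of_inv hp (by omega) (isCoprime_of_mul_sq_eq hp hp5 hs heq) hζ'
      (d := d') (hinj (by simpa [hcd] using hd)) g (hinj ?_)
      (hinj (by rw [hsmul, map_neg, hcd]; simpa using h2))
    rw [map_mul, hsmul, hcζ, h1, zpow_neg_one, inv_mul_cancel₀ (hζ.ne_zero hp.ne_zero), map_one]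

end Mirror

/-- A squarefree integer divisible by a prime `q ≠ p` is not a square in the `p`-th cyclotomic
field. -/
theorem IsCyclotomicExtension.sq_ne_intCast {K : Type*} [Field K] [CharZero K] {p : ℕ}
    [hp : Fact p.Prime] [IsCyclotomicExtension {p} ℚ K] {M : ℤ} (hM : Squarefree M) {q : ℕ}
    (hq : q.Prime) (hqp : q ≠ p) (hqM : (q : ℤ) ∣ M) (d : K) : d ^ 2 ≠ M := by
  intro hd
  obtain ⟨ζ, hζ⟩ : ∃ ζ : K, IsPrimitiveRoot ζ p :=
    IsCyclotomicExtension.exists_isPrimitiveRoot ℚ K (Set.mem_singleton p) hp.out.ne_zero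
  have : NeZero p := ⟨hp.out.ne_zero⟩
  have hdint : IsIntegral ℤ d := .of_pow two_pos (by rw [hd]; exact isIntegral_algebraMap (x := M))
  have := IsCyclotomicExtension.Rat.isIntegralClosure_adjoin_singleton_of_prime hζ
  obtain ⟨P, hP⟩ : ∃ P : ℤ[X], aeval ζ P = d := by
    obtain ⟨y, hy⟩ := (IsIntegralClosure.isIntegral_iff (A := Algebra.adjoin ℤ {ζ})).mp hdint
    obtain ⟨P, hP⟩ := Algebra.adjoin_mem_exists_aeval ℤ ζ y.2
    exact ⟨P, hP.trans hy⟩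
  have hinj : Function.Injective (algebraMap (𝓞 K) K) := FaithfulSMul.algebraMap_injective _ _
  set ζ' : 𝓞 K := hζ.toInteger
  have hPd : algebraMap (𝓞 K) K (aeval ζ' P) = d := by
    rw [← hP, ← aeval_algebraMap_apply]
    rfl
  have hsq : aeval ζ' P ^ 2 = (M : 𝓞 K) := hinj (by rw [map_pow, hPd, hd, map_intCast])
  let π := Ideal.Quotient.mk (Ideal.span {(q : 𝓞 K)})
  have hq0 : (q : 𝓞 K ⧸ Ideal.span {(q : 𝓞 K)}) = 0 := by
    rw [← map_natCast π]
    exact Ideal.Quotient.eq_zero_iff_mem.mpr (Ideal.mem_span_singleton_self _)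
  have hzero : π (aeval ζ' P) = 0 := by
    nontriviality 𝓞 K ⧸ Ideal.span {(q : 𝓞 K)}
    have : CharP (𝓞 K ⧸ Ideal.span {(q : 𝓞 K)}) q :=
      (CharP.charP_iff_prime_eq_zero hq).mpr hq0
    have : ExpChar (𝓞 K ⧸ Ideal.span {(q : 𝓞 K)}) q := .prime hq
    let φ := iterateFrobenius (𝓞 K ⧸ Ideal.span {(q : 𝓞 K)}) q (p - 1)
    have h1 : φ (π (aeval ζ' P)) = π (aeval ζ' P) := by
      have h2 : φ (π ζ') = π ζ' := by
        rw [iterateFrobenius_def, ← map_pow]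
        have h3 : q ^ (p - 1) ≡ 1 [MOD p] := by
          rw [← Nat.totient_prime hp.out]
          exact Nat.ModEq.pow_totient ((Nat.coprime_primes hq hp.out).mpr hqp)
        rw [pow_eq_pow_of_modEq h3 hζ.toInteger_isPrimitiveRoot.pow_eq_one, pow_one]
      rw [← RingHom.comp_apply φ π, aeval_def, hom_eval₂, hom_eval₂, RingHom.comp_apply, h2]
      congr 1
      exact RingHom.ext_int _ _
    have h4 : π (aeval ζ' P) ^ 2 = 0 := by
      obtain ⟨m, rfl⟩ := hqM
      rw [← map_pow, hsq, map_intCast]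
      push_cast
      rw [hq0, zero_mul]
    rw [← h1, iterateFrobenius_def]
    refine pow_eq_zero_of_le ?_ h4
    exact hq.two_le.trans (Nat.le_self_pow (by have := hp.out.two_le; omega) q)
  obtain ⟨e, he⟩ := Ideal.mem_span_singleton.mp (Ideal.Quotient.eq_zero_iff_mem.mp hzero)
  have hq0 : (q : ℚ) ≠ 0 := by exact_mod_cast hq.ne_zero
  have hxint : IsIntegral ℤ (M / q ^ 2 : ℚ) := by
    rw [← isIntegral_algebraMap_iff (FaithfulSMul.algebraMap_injective ℚ K)]
    have : algebraMap ℚ K (M / q ^ 2) = algebraMap (𝓞 K) K e ^ 2 := by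
      have hq0 : (q : K) ≠ 0 := by exact_mod_cast hq.ne_zero
      rw [map_div₀, map_pow, map_intCast, map_natCast, div_eq_iff (pow_ne_zero 2 hq0), ← hd, ← hPd,
        he, map_mul, map_natCast]
      ring
    rw [this]
    exact (RingOfIntegers.isIntegral_coe e).pow 2
  obtain ⟨n, hn⟩ := IsIntegrallyClosed.isIntegral_iff.mp hxint
  rw [eq_intCast, eq_div_iff (pow_ne_zero 2 hq0)] at hn
  have hn' : n * (q : ℤ) ^ 2 = M := by exact_mod_cast hn
  have := hM q ⟨n, by rw [← hn']; ring⟩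
  exact (Nat.prime_iff_prime_int.mp hq).not_isUnit this

/-- Elements of a simple extension `k(w)` with `w ^ 2 ∈ S` have the form `a + b * w` with
`a, b ∈ S`. -/
theorem IntermediateField.exists_add_mul_of_mem_adjoin_simple {k L : Type*} [Field k] [Field L]
    [Algebra k L] (S : Subalgebra k L) {w x : L} (hw : IsAlgebraic k w) (hwS : w ^ 2 ∈ S)
    (hx : x ∈ k⟮w⟯) : ∃ a ∈ S, ∃ b ∈ S, x = a + b * w := by
  rw [← mem_toSubalgebra, adjoin_simple_toSubalgebra_of_isAlgebraic hw] at hx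
  induction hx using Algebra.adjoin_induction with
  | mem x hx => exact ⟨0, S.zero_mem, 1, S.one_mem, by rw [Set.mem_singleton_iff.mp hx]; ring⟩
  | algebraMap c => exact ⟨_, S.algebraMap_mem c, 0, S.zero_mem, by ring⟩
  | add x y _ _ hx hy =>
    obtain ⟨a, ha, b, hb, rfl⟩ := hx
    obtain ⟨a', ha', b', hb', rfl⟩ := hy
    exact ⟨a + a', add_mem ha ha', b + b', add_mem hb hb', by ring⟩
  | mul x y _ _ hx hy =>
    obtain ⟨a, ha, b, hb, rfl⟩ := hx
    obtain ⟨a', ha', b', hb', rfl⟩ := hy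
    exact ⟨a * a' + b * b' * w ^ 2, add_mem (mul_mem ha ha') (mul_mem (mul_mem hb hb') hwS),
      a * b' + b * a', add_mem (mul_mem ha hb') (mul_mem hb ha'), by ring⟩

/-- A square root of a squarefree integer divisible by a prime `q ≠ p` does not lie in
`ℚ(ζ_p)`. -/
theorem IsPrimitiveRoot.sqrt_notMem_adjoin {p : ℕ} (hp : p.Prime) {ζ d : ℂ}
    (hζ : IsPrimitiveRoot ζ p) {M : ℤ} (hM : Squarefree M) {q : ℕ}
    (hq : q.Prime) (hqp : q ≠ p) (hqM : (q : ℤ) ∣ M) (hd : d ^ 2 = M) : d ∉ ℚ⟮ζ⟯ := by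
  intro hmem
  have : Fact p.Prime := ⟨hp⟩
  have : NeZero p := ⟨hp.ne_zero⟩
  have : IsCyclotomicExtension {p} ℚ ℚ⟮ζ⟯ := by
    change IsCyclotomicExtension {p} ℚ ℚ⟮ζ⟯.toSubalgebra
    rw [adjoin_simple_toSubalgebra_of_isAlgebraic
      ((hζ.isIntegral hp.pos).tower_top (A := ℚ)).isAlgebraic]
    exact hζ.adjoin_isCyclotomicExtension ℚ
  refine IsCyclotomicExtension.sq_ne_intCast (p := p) (K := ℚ⟮ζ⟯) hM hq hqp hqM ⟨d, hmem⟩ ?_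
  exact Subtype.ext (by simpa using hd)

/-- The field `ℚ((ζ - ζ⁻¹) * √M)` contains no nontrivial `p`-th root of unity. -/
theorem eq_one_of_pow_eq_one_of_mem_adjoin {p : ℕ} (hp : p.Prime) (hp2 : p ≠ 2) {ζ : ℂ}
    (hζ : IsPrimitiveRoot ζ p) {M : ℤ} {d : ℝ} (hd : d ^ 2 = M) (hd0 : (d : ℂ) ∉ ℚ⟮ζ⟯)
    {x : ℂ} (hx : x ∈ ℚ⟮(ζ - ζ⁻¹) * d⟯) (hxp : x ^ p = 1) : x = 1 := by
  have : NeZero p := ⟨hp.ne_zero⟩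
  have hodd : Odd p := hp.odd_of_ne_two hp2
  have hconj {z : ℂ} (hz : z ^ p = 1) : (starRingEnd ℂ) z = z⁻¹ :=
    (Complex.inv_eq_conj (Complex.norm_eq_one_of_pow_eq_one hz hp.ne_zero)).symm
  have hζmem : ζ ∈ ℚ⟮ζ⟯ := mem_adjoin_simple_self ℚ ζ
  have hδ : ζ - ζ⁻¹ ∈ ℚ⟮ζ⟯ := sub_mem hζmem (inv_mem hζmem)
  have hdC : (d : ℂ) ^ 2 = M := by exact_mod_cast congrArg Complex.ofReal hd
  set w : ℂ := (ζ - ζ⁻¹) * d with hw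
  have hwconj : (starRingEnd ℂ) w = -w := by
    rw [hw, map_mul, map_sub, map_inv₀, hconj hζ.pow_eq_one, inv_inv, Complex.conj_ofReal]
    ring
  have hwint : IsIntegral ℚ w := by
    have hζint : IsIntegral ℚ ζ := (hζ.isIntegral hp.pos).tower_top
    exact (hζint.sub hζint.inv).mul (.of_pow two_pos (by
      rw [hdC]; exact isIntegral_algebraMap (x := (M : ℚ))))
  let S : Subalgebra ℚ ℂ := ℚ⟮ζ⟯.toSubalgebra ⊓ (IsScalarTower.toAlgHom ℚ ℝ ℂ).range
  have hS {c : ℂ} (hc : c ∈ S) : (starRingEnd ℂ) c = c := by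
    obtain ⟨-, y, rfl⟩ := hc
    exact Complex.conj_ofReal y
  have hwS : w ^ 2 ∈ S := by
    constructor
    · rw [hw, mul_pow, hdC]
      exact mul_mem (pow_mem hδ 2) (intCast_mem _ M)
    · obtain ⟨y, hy⟩ := Complex.conj_eq_iff_real.mp
        (show (starRingEnd ℂ) (w ^ 2) = w ^ 2 by rw [map_pow, hwconj, neg_sq])
      exact ⟨y, hy.symm⟩
  obtain ⟨a, ha, b, hb, hxab⟩ := exists_add_mul_of_mem_adjoin_simple S hwint.isAlgebraic hwS hx
  have hxinv : x⁻¹ = a - b * w := by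
    rw [← hconj hxp, hxab, map_add, map_mul, hS ha, hS hb, hwconj]
    ring
  have hxmem : x ∈ ℚ⟮ζ⟯ := by
    obtain ⟨i, -, rfl⟩ := hζ.eq_pow_of_pow_eq_one hxp
    exact pow_mem hζmem i
  by_cases h0 : 2 * b * (ζ - ζ⁻¹) = 0
  · have h1 : x = x⁻¹ := by
      rw [hxinv, hxab, hw]
      linear_combination d * h0
    have hx0 : x ≠ 0 := by rintro rfl; simp [hp.ne_zero] at hxp
    have h2 : x ^ 2 = 1 := by
      rw [sq]
      nth_rewrite 2 [h1]
      exact mul_inv_cancel₀ hx0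
    obtain ⟨k, hk⟩ := hodd
    rwa [hk, pow_succ, pow_mul, h2, one_pow, one_mul] at hxp
  · refine absurd ?_ hd0
    have h1 : (d : ℂ) = (x - x⁻¹) / (2 * b * (ζ - ζ⁻¹)) := by
      rw [eq_div_iff h0, hxinv, hxab, hw]
      ring
    rw [h1]
    exact div_mem (sub_mem hxmem (inv_mem hxmem))
      (mul_mem (mul_mem (ofNat_mem _ 2) hb.1) hδ)

/-- If `(a + b * d) ^ p` is the unit `(T + r * d) / 2` with `a, b` rational, then
`a + b * d = (u + v * d) / 2` with integers `u, v` satisfying `u ^ 2 - M * v ^ 2 = ± 4`. -/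
theorem exists_int_of_pow_eq {p : ℕ} (hp : Odd p) {s T M r : ℤ} (hM : Squarefree M)
    (hs : s = -1 ∨ s = 1) (heq : T ^ 2 - 4 * s = M * r ^ 2)
    {d : ℝ} (hd : d ^ 2 = M) (hirr : Irrational d) {a b : ℚ}
    (hab : ((a : ℝ) + b * d) ^ p = (T + r * d) / 2) :
    ∃ u v : ℤ, (u ^ 2 - M * v ^ 2 = 4 ∨ u ^ 2 - M * v ^ 2 = -4) ∧
      (((u : ℝ) + v * d) / 2) ^ p = (T + r * d) / 2 := by
  have hp0 : p ≠ 0 := hp.pos.ne'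
  have hcong (n : ℕ) : ∃ x y : ℚ, ((a : ℝ) + b * d) ^ n = x + y * d ∧
      ((a : ℝ) - b * d) ^ n = x - y * d := by
    induction n with
    | zero => exact ⟨1, 0, by simp, by simp⟩
    | succ n ih =>
      obtain ⟨x, y, h1, h2⟩ := ih
      refine ⟨x * a + y * b * M, x * b + y * a, ?_, ?_⟩
      · rw [pow_succ, h1]; push_cast; linear_combination y * b * hd
      · rw [pow_succ, h2]; push_cast; linear_combination y * b * hd
  obtain ⟨x, y, h1, h2⟩ := hcong p
  have hxy : x = T / 2 ∧ y = r / 2 := by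
    have h3 : ((y - r / 2 : ℚ) : ℝ) * d = ((T / 2 - x : ℚ) : ℝ) := by
      push_cast
      linear_combination hab - h1
    by_cases hy : y - r / 2 = 0
    · rw [hy, Rat.cast_zero, zero_mul] at h3
      have h4 : (0 : ℚ) = T / 2 - x := by exact_mod_cast h3
      exact ⟨by linarith, by linarith⟩
    · exact absurd h3 ((hirr.ratCast_mul hy).ne_rat _)
  obtain ⟨rfl, rfl⟩ := hxy
  have hconj : ((a : ℝ) - b * d) ^ p = (T - r * d) / 2 := by rw [h2]; push_cast; ring
  have heqR : (T : ℝ) ^ 2 - 4 * s = M * r ^ 2 := by exact_mod_cast heq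
  set n : ℚ := a ^ 2 - M * b ^ 2 with hn
  have hnp : n ^ p = s := by
    have : ((n ^ p : ℚ) : ℝ) = ((s : ℚ) : ℝ) := by
      have h5 : (n : ℝ) = (a + b * d) * (a - b * d) := by
        rw [hn]; push_cast; linear_combination b ^ 2 * hd
      rw [Rat.cast_pow, h5, mul_pow, hab, hconj]
      push_cast
      linear_combination heqR / 4 - r ^ 2 * hd / 4
    exact_mod_cast this
  have hns : n = s := by
    refine hp.strictMono_pow.injective (hnp.trans ?_)
    rcases hs with rfl | rfl
    · simp [hp.neg_one_pow]
    · simp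
  have hint1 : IsIntegral ℤ ((T + r * d) / 2 : ℝ) := by
    refine ⟨X ^ 2 - C T * X + C s, by monicity!, ?_⟩
    rw [eval₂_add, eval₂_sub, eval₂_mul, eval₂_pow, eval₂_X, eval₂_C, eval₂_C, eq_intCast,
        eq_intCast]
    linear_combination (r ^ 2 * hd - heqR) / 4
  have hint2 : IsIntegral ℤ ((T - r * d) / 2 : ℝ) := by
    refine ⟨X ^ 2 - C T * X + C s, by monicity!, ?_⟩
    rw [eval₂_add, eval₂_sub, eval₂_mul, eval₂_pow, eval₂_X, eval₂_C, eval₂_C, eq_intCast,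
        eq_intCast]
    linear_combination (r ^ 2 * hd - heqR) / 4
  have hrat {c : ℚ} (hc : IsIntegral ℤ (c : ℝ)) : ∃ m : ℤ, (m : ℚ) = c :=
    IsIntegrallyClosed.isIntegral_iff.mp ((isIntegral_algebraMap_iff
      (FaithfulSMul.algebraMap_injective ℚ ℝ)).mp hc)
  obtain ⟨u, hu⟩ : ∃ u : ℤ, (u : ℚ) = 2 * a := by
    apply hrat
    have := (IsIntegral.of_pow hp.pos (hab ▸ hint1)).add (IsIntegral.of_pow hp.pos (hconj ▸ hint2))
    rwa [show (a : ℝ) + b * d + (a - b * d) = ((2 * a : ℚ) : ℝ) by push_cast; ring] at this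
  have hM0 : (M : ℚ) ≠ 0 := by exact_mod_cast hM.ne_zero
  obtain ⟨m, hm⟩ : ∃ m : ℤ, (m : ℚ) = M * (2 * b) := by
    have : ((M : ℚ) * (2 * b)) ^ 2 = ((M * (u ^ 2 - 4 * s) : ℤ) : ℚ) := by
      push_cast
      rw [hu, ← hns, hn]
      ring
    exact IsIntegrallyClosed.isIntegral_iff.mp
      (IsIntegral.of_pow two_pos (by rw [this]; exact isIntegral_algebraMap))
  have hMm : M ∣ m := by
    rw [← hM.dvd_pow_iff_dvd two_ne_zero]
    refine ⟨u ^ 2 - 4 * s, ?_⟩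
    have : (m : ℚ) ^ 2 = M * (u ^ 2 - 4 * s) := by rw [hm, hu, ← hns, hn]; ring
    exact_mod_cast this
  obtain ⟨v, rfl⟩ := hMm
  have hv : (v : ℚ) = 2 * b := by
    push_cast at hm
    exact mul_left_cancel₀ hM0 hm
  refine ⟨u, v, ?_, ?_⟩
  · have : (u : ℚ) ^ 2 - M * v ^ 2 = 4 * s := by rw [hu, hv, ← hns, hn]; ring
    have : u ^ 2 - M * v ^ 2 = 4 * s := by exact_mod_cast this
    rcases hs with rfl | rfl
    · right; linarith
    · left; linarith
  · rw [← hab]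
    have h6 : (u : ℝ) = 2 * a := by exact_mod_cast congrArg (Rat.cast (K := ℝ)) hu
    have h7 : (v : ℝ) = 2 * b := by exact_mod_cast congrArg (Rat.cast (K := ℝ)) hv
    rw [h6, h7]
    ring

/-- A field containing `d = √M` and a `p`-th root of `-s * E ^ 2`, where `E = (T + r * d) / 2` is
not a `p`-th power of a unit, has degree divisible by `p`. -/
theorem prime_dvd_finrank_of_not_pow {p : ℕ} (hp : p.Prime) (hp2 : p ≠ 2) {s T M r : ℤ}
    (hM : Squarefree M) (hs : s = -1 ∨ s = 1) (heq : T ^ 2 - 4 * s = M * r ^ 2)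
    {d : ℝ} (hd : d ^ 2 = M) (hirr : Irrational d)
    (hnotpow : ¬∃ u v : ℤ, (u ^ 2 - M * v ^ 2 = 4 ∨ u ^ 2 - M * v ^ 2 = -4) ∧
      (((u : ℝ) + v * d) / 2) ^ p = (T + r * d) / 2)
    {θ : ℂ} (hθ : θ ^ p = -s * ((T + r * d) / 2) ^ 2) (N : IntermediateField ℚ ℂ)
    (hdN : (d : ℂ) ∈ N) (hθN : θ ∈ N) : p ∣ finrank ℚ N := by
  have hodd : Odd p := hp.odd_of_ne_two hp2
  have hdC : (d : ℂ) ^ 2 = M := by exact_mod_cast congrArg Complex.ofReal hd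
  have hdint : IsIntegral ℚ (d : ℂ) :=
    .of_pow two_pos (by rw [hdC]; exact isIntegral_algebraMap (x := (M : ℚ)))
  have hs2 : (s : ℂ) ^ 2 = 1 := by rcases hs with rfl | rfl <;> simp
  have hsp : (-s : ℂ) ^ p = -s := by
    rcases hs with rfl | rfl <;> simp [hodd.neg_one_pow]
  have heqC : (T : ℂ) ^ 2 - 4 * s = M * r ^ 2 := by exact_mod_cast heq
  have hdmem : (d : ℂ) ∈ ℚ⟮(d : ℂ)⟯ := mem_adjoin_simple_self ℚ _
  let E : ℚ⟮(d : ℂ)⟯ := (T + r * ⟨d, hdmem⟩) / 2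
  have hEC : (E : ℂ) = (T + r * d) / 2 := by simp [E]; rfl
  have hE0 : (E : ℂ) ≠ 0 := by
    intro h
    have : (s : ℂ) = E * ((T - r * d) / 2) := by
      rw [hEC]; linear_combination r ^ 2 * hdC / 4 - heqC / 4
    rw [h, zero_mul] at this
    rw [this] at hs2
    norm_num at hs2
  have hirred : Irreducible (X ^ p - C (-s * E ^ 2)) := by
    refine X_pow_sub_C_irreducible_of_prime hp fun κ hκ => hnotpow ?_
    have hκC : (κ : ℂ) ^ p = -s * E ^ 2 := by simpa using congrArg Subtype.val hκ
    have hκ1 : (-s * κ : ℂ) ^ p = E ^ 2 := by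
      rw [mul_pow, hκC, hsp]
      linear_combination (E : ℂ) ^ 2 * hs2
    obtain ⟨m, hm⟩ := id hodd
    have hpow : ((E : ℂ) / (-s * κ) ^ m) ^ p = E := by
      rw [div_pow, ← pow_mul, mul_comm m, pow_mul, hκ1, hm, ← pow_mul, pow_succ]
      exact mul_div_cancel_left₀ _ (pow_ne_zero _ hE0)
    have hmem : (E : ℂ) / (-s * κ) ^ m ∈ ℚ⟮(d : ℂ)⟯ :=
      div_mem E.2 (pow_mem (mul_mem (neg_mem (intCast_mem _ s)) κ.2) m)
    obtain ⟨a, ha, b, hb, hab⟩ := exists_add_mul_of_mem_adjoin_simple ⊥ hdint.isAlgebraic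
      (by rw [hdC]; exact intCast_mem _ M) hmem
    obtain ⟨a, rfl⟩ := ha
    obtain ⟨b, rfl⟩ := hb
    rw [hab, hEC] at hpow
    refine exists_int_of_pow_eq hodd hM hs heq hd hirr (a := a) (b := b) ?_
    simp only [eq_ratCast] at hpow
    exact_mod_cast hpow
  have hroot : aeval θ (X ^ p - C (-s * E ^ 2)) = 0 := by
    simp [hθ, hEC]
  have hmin := minpoly.eq_of_irreducible_of_monic hirred hroot (monic_X_pow_sub_C _ hp.ne_zero)
  have hθint : IsIntegral ℚ⟮(d : ℂ)⟯ θ := ⟨_, monic_X_pow_sub_C _ hp.ne_zero, hroot⟩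
  have hdeg : finrank ℚ⟮(d : ℂ)⟯ ℚ⟮(d : ℂ)⟯⟮θ⟯ = p := by
    rw [adjoin.finrank hθint, ← hmin, natDegree_X_pow_sub_C]
  have hle : ℚ⟮(d : ℂ)⟯⟮θ⟯.restrictScalars ℚ ≤ N := by
    have hle' : ℚ⟮(d : ℂ)⟯ ≤ N := adjoin_simple_le_iff.mpr hdN
    have : ℚ⟮(d : ℂ)⟯⟮θ⟯ ≤ extendScalars hle' := adjoin_simple_le_iff.mpr hθN
    exact fun x hx => this hx
  have h1 : finrank ℚ (ℚ⟮(d : ℂ)⟯⟮θ⟯.restrictScalars ℚ) = finrank ℚ ℚ⟮(d : ℂ)⟯ * p := by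
    rw [← hdeg]
    exact (finrank_mul_finrank ℚ ℚ⟮(d : ℂ)⟯ ℚ⟮(d : ℂ)⟯⟮θ⟯).symm
  exact (Dvd.intro_left _ h1.symm).trans (finrank_dvd_of_le_right hle)

/-- The degree of `ℚ((ζ - ζ⁻¹) * √M)` is prime to `p`. -/
theorem not_dvd_finrank_adjoin {p : ℕ} (hp : p.Prime) (hp2 : p ≠ 2) {ζ d : ℂ}
    (hζ : IsPrimitiveRoot ζ p) {M : ℤ} (hd : d ^ 2 = M) :
    ¬ p ∣ finrank ℚ ℚ⟮(ζ - ζ⁻¹) * d⟯ := by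
  have hle : ℚ⟮(ζ - ζ⁻¹) * d⟯ ≤ ℚ⟮ζ⟯⟮d⟯.restrictScalars ℚ := by
    rw [adjoin_simple_le_iff, mem_restrictScalars]
    have h1 : ζ ∈ ℚ⟮ζ⟯⟮d⟯ := ℚ⟮ζ⟯⟮d⟯.algebraMap_mem ⟨ζ, mem_adjoin_simple_self ℚ ζ⟩
    have h2 : d ∈ ℚ⟮ζ⟯⟮d⟯ := mem_adjoin_simple_self _ d
    exact mul_mem (sub_mem h1 (inv_mem h1)) h2
  have hζint : IsIntegral ℚ ζ := (hζ.isIntegral hp.pos).tower_top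
  have h1 : finrank ℚ ℚ⟮ζ⟯ = p - 1 := by
    rw [adjoin.finrank hζint, ← cyclotomic_eq_minpoly_rat hζ hp.pos, natDegree_cyclotomic,
      Nat.totient_prime hp]
  have hroot : aeval d (X ^ 2 - C (M : ℚ⟮ζ⟯)) = 0 := by simp [hd]
  have hdint : IsIntegral ℚ⟮ζ⟯ d := ⟨_, monic_X_pow_sub_C _ two_ne_zero, hroot⟩
  have h2 : finrank ℚ⟮ζ⟯ ℚ⟮ζ⟯⟮d⟯ ≤ 2 := by
    rw [adjoin.finrank hdint]
    exact (natDegree_le_of_dvd (minpoly.dvd _ _ hroot)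
      (monic_X_pow_sub_C _ two_ne_zero).ne_zero).trans natDegree_X_pow_sub_C.le
  have : FiniteDimensional ℚ⟮ζ⟯ ℚ⟮ζ⟯⟮d⟯ := adjoin.finiteDimensional hdint
  have h3 : 0 < finrank ℚ⟮ζ⟯ ℚ⟮ζ⟯⟮d⟯ := finrank_pos
  intro h
  have h4 := h.trans (finrank_dvd_of_le_right hle)
  have h5 : finrank ℚ (ℚ⟮ζ⟯⟮d⟯.restrictScalars ℚ) = (p - 1) * finrank ℚ⟮ζ⟯ ℚ⟮ζ⟯⟮d⟯ := by
    rw [← h1]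
    exact (finrank_mul_finrank ℚ ℚ⟮ζ⟯ ℚ⟮ζ⟯⟮d⟯).symm
  have hp2' := hp.two_le
  rw [h5, hp.dvd_mul] at h4
  rcases h4 with h4 | h4
  · have := Nat.le_of_dvd (by omega) h4
    omega
  · have := Nat.le_of_dvd h3 h4
    omega

/-- If `A + A⁻¹` lies in `F`, then adjoining a primitive `p`-th root of unity and a `p`-th root of
`A` yields a Galois extension of `F`. -/
theorem isGalois_adjoin_pair {F L : Type*} [Field F] [CharZero F] [Field L] [IsAlgClosed L]
    [Algebra F L] {p : ℕ} (hp : 0 < p) {ζ θ : L} (hζ : IsPrimitiveRoot ζ p) (hθ0 : θ ≠ 0) {c : F}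
    (hc : θ ^ p + (θ ^ p)⁻¹ = algebraMap F L c) :
    FiniteDimensional F F⟮ζ, θ⟯ ∧ IsGalois F F⟮ζ, θ⟯ := by
  have : NeZero p := ⟨hp.ne'⟩
  let f : F[X] := (X ^ p - 1) * ((X ^ p) ^ 2 - C c * X ^ p + 1)
  have hf : f ≠ 0 := by
    intro h
    simpa [f, hp.ne'] using congrArg (eval 0) h
  have hA0 : θ ^ p ≠ 0 := pow_ne_zero p hθ0
  have hfx (x : L) : aeval x f = (x ^ p - 1) * ((x ^ p - θ ^ p) * (x ^ p - (θ ^ p)⁻¹)) := by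
    simp only [f, map_mul, map_sub, map_add, map_pow, aeval_X, aeval_C, map_one, ← hc]
    linear_combination (x ^ p - 1) * (-mul_inv_cancel₀ hA0)
  have hζmem : ζ ∈ F⟮ζ, θ⟯ := subset_adjoin _ _ (by simp)
  have hθmem : θ ∈ F⟮ζ, θ⟯ := subset_adjoin _ _ (by simp)
  have hmem {x y : L} (hy : y ∈ F⟮ζ, θ⟯) (hy0 : y ≠ 0) (hxy : x ^ p = y ^ p) : x ∈ F⟮ζ, θ⟯ := by
    have : (x / y) ^ p = 1 := by rw [div_pow, hxy, div_self (pow_ne_zero p hy0)]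
    obtain ⟨i, -, hi⟩ := hζ.eq_pow_of_pow_eq_one this
    rw [← div_mul_cancel₀ x hy0, ← hi]
    exact mul_mem (pow_mem hζmem i) hy
  have hadj : F⟮ζ, θ⟯ = adjoin F (f.rootSet L) := by
    refine le_antisymm (adjoin_le_iff.mpr ?_) (adjoin_le_iff.mpr fun x hx => ?_)
    · rintro x (rfl | rfl) <;> refine subset_adjoin _ _ ((mem_rootSet_of_ne hf).mpr ?_)
      · rw [hfx, hζ.pow_eq_one, sub_self, zero_mul]
      · rw [hfx, sub_self, zero_mul, mul_zero]
    · rw [mem_rootSet_of_ne hf, hfx, mul_eq_zero, mul_eq_zero, sub_eq_zero, sub_eq_zero,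
        sub_eq_zero] at hx
      rcases hx with hx | hx | hx
      · exact hmem (one_mem _) one_ne_zero (by rw [hx, one_pow])
      · exact hmem hθmem hθ0 hx
      · exact hmem (inv_mem hθmem) (inv_ne_zero hθ0) (by rw [hx, inv_pow])
  have hsplit : f.IsSplittingField F F⟮ζ, θ⟯ := by
    rw [hadj]
    exact adjoin_rootSet_isSplittingField (IsAlgClosed.splits _)
  have hnormal : Normal F F⟮ζ, θ⟯ := .of_isSplittingField f
  exact ⟨IsSplittingField.finiteDimensional _ f, {}⟩

/-- let `p ≥ 5` be prime, `s = ±1`, `t ≥ 1`, `p⁴t² − 4s = M·r²`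
with `M ≥ 2` squarefree and `r ≥ 1`, and let `E = (p²t + r√M)/2`, a unit of norm
`s` of `O_{ℚ(√M)}`.  If `E` is not a `p`th power in the unit group of
`O_{ℚ(√M)}`, then `p` divides the class number of the imaginary cyclic field
`F = ℚ((ζ_p − ζ_p⁻¹)·√M)` of degree `p − 1`, where `ζ_p = exp(2πi/p)`. -/
theorem p_divides_class_number_of_mirror_field
    (p : ℕ) (hp : p.Prime) (hp5 : 5 ≤ p)
    (s t : ℤ) (hs : s = -1 ∨ s = 1) (ht : 1 ≤ t)
    (M r : ℤ) (hM : 2 ≤ M) (hsqf : Squarefree M) (hr : 1 ≤ r)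
    (heq : (p : ℤ) ^ 4 * t ^ 2 - 4 * s = M * r ^ 2)
    (hnotpow : ¬∃ u v : ℤ, (u ^ 2 - M * v ^ 2 = 4 ∨ u ^ 2 - M * v ^ 2 = -4) ∧
      (((u : ℝ) + (v : ℝ) * Real.sqrt M) / 2) ^ p =
        ((p : ℝ) ^ 2 * (t : ℝ) + (r : ℝ) * Real.sqrt M) / 2) :
    ∀ (F : IntermediateField ℚ ℂ) [NumberField F],
      F = IntermediateField.adjoin ℚ
        {(Complex.exp (2 * Real.pi * Complex.I / p) -
            (Complex.exp (2 * Real.pi * Complex.I / p))⁻¹) *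
          ((Real.sqrt (M : ℝ) : ℝ) : ℂ)} →
      p ∣ NumberField.classNumber F := by
  intro F _ hF
  have hp2 : p ≠ 2 := by omega
  have hζ := Complex.isPrimitiveRoot_exp p hp.ne_zero
  generalize Complex.exp (2 * Real.pi * Complex.I / p) = ζ at hF hζ
  have hd : √(M : ℝ) ^ 2 = M := Real.sq_sqrt (by exact_mod_cast (by omega : 0 ≤ M))
  generalize √(M : ℝ) = d at hF hd hnotpow
  have hdC : (d : ℂ) ^ 2 = M := by exact_mod_cast congrArg Complex.ofReal hd
  have hd0 : (d : ℂ) ∉ ℚ⟮ζ⟯ := by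
    obtain ⟨q, hq, hqM⟩ := Nat.exists_prime_and_dvd (n := M.natAbs) (by omega)
    have hqM' : (q : ℤ) ∣ M := Int.natCast_dvd.mpr hqM
    refine hζ.sqrt_notMem_adjoin hp hsqf hq ?_ hqM' hdC
    rintro rfl
    exact (Nat.prime_iff_prime_int.mp hp).not_isUnit
      ((isCoprime_of_mul_sq_eq hp hp5 hs heq).isUnit_of_dvd' dvd_rfl (hqM'.mul_left 4))
  have hirr : Irrational d := by
    rintro ⟨a, rfl⟩
    exact hd0 (by simp)
  have heqC : (p : ℂ) ^ 4 * t ^ 2 - 4 * s = d ^ 2 * r ^ 2 := by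
    rw [hdC]; exact_mod_cast heq
  have hs2 : (s : ℂ) ^ 2 = 1 := by rcases hs with rfl | rfl <;> norm_num
  obtain ⟨θ, hθ⟩ := IsAlgClosed.exists_pow_nat_eq
    (-s * (((p : ℂ) ^ 2 * t + r * d) / 2) ^ 2) hp.pos
  have hinv : θ ^ p * (-s * (((p : ℂ) ^ 2 * t - r * d) / 2) ^ 2) = 1 := by
    rw [hθ]
    linear_combination (s ^ 2 * ((p : ℂ) ^ 4 * t ^ 2 - d ^ 2 * r ^ 2 + 4 * s) / 16) * heqC +
      (s ^ 2 + 1) * hs2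
  have hθ0 : θ ≠ 0 := by
    rintro rfl
    simp [hp.ne_zero] at hinv
  have hc : θ ^ p + (θ ^ p)⁻¹ = algebraMap F ℂ ((2 - s * (p ^ 4 * t ^ 2) : ℤ) : F) := by
    rw [inv_eq_of_mul_eq_one_right hinv, hθ, map_intCast]
    push_cast
    linear_combination (s / 2 : ℂ) * heqC + 2 * hs2
  obtain ⟨hfin, hgal⟩ := isGalois_adjoin_pair hp.pos hζ hθ0 hc
  have hζH : ζ ∈ F⟮ζ, θ⟯ := subset_adjoin _ _ (by simp)
  have hθH : θ ∈ F⟮ζ, θ⟯ := subset_adjoin _ _ (by simp)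
  have hwF : (ζ - ζ⁻¹) * d ∈ F := hF ▸ mem_adjoin_simple_self ℚ _
  have hζ1 : ζ - ζ⁻¹ ≠ 0 := by
    intro h
    have h0 := hζ.ne_zero hp.ne_zero
    have : ζ ^ 2 = 1 := by
      field_simp at h
      linear_combination h
    have := Nat.le_of_dvd two_pos (hζ.dvd_of_pow_eq_one 2 this)
    omega
  have hdH : (d : ℂ) ∈ F⟮ζ, θ⟯ := by
    rw [← mul_div_cancel_left₀ (d : ℂ) hζ1]
    exact div_mem (F⟮ζ, θ⟯.algebraMap_mem ⟨_, hwF⟩) (sub_mem hζH (inv_mem hζH))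
  have : NumberField F⟮ζ, θ⟯ := { to_finiteDimensional := Module.Finite.trans F _ }
  have hdeg : p ∣ finrank F F⟮ζ, θ⟯ := by
    have h1 : p ∣ finrank ℚ (F⟮ζ, θ⟯.restrictScalars ℚ) := by
      refine prime_dvd_finrank_of_not_pow (T := p ^ 2 * t) (r := r) hp hp2 hsqf hs ?_ hd hirr ?_ ?_
        _ hdH hθH
      · rw [← heq]; ring
      · simpa using hnotpow
      · simpa using hθ
    have h2 : finrank ℚ F * finrank F F⟮ζ, θ⟯ = finrank ℚ (F⟮ζ, θ⟯.restrictScalars ℚ) :=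
      finrank_mul_finrank ℚ F F⟮ζ, θ⟯
    rw [← h2] at h1
    refine (hp.dvd_mul.mp h1).resolve_left ?_
    rw [hF]
    exact not_dvd_finrank_adjoin hp hp2 hζ hdC
  refine prime_dvd_classNumber_of_mirror (H := F⟮ζ, θ⟯) (ζ := ⟨ζ, hζH⟩) (d := ⟨d, hdH⟩)
    (θ := ⟨θ, hθH⟩) hp hp5 hs (by omega) heq ?_ ?_ ⟨⟨_, hwF⟩, rfl⟩ ?_ ?_ hdeg ?_
  · exact (IsPrimitiveRoot.coe_submonoidClass_iff (M := ℂ)).mp hζ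
  · exact Subtype.ext (by simpa using hdC)
  · exact Subtype.ext hθ
  · intro g hgζ hgθ
    apply AlgEquiv.coe_toAlgHom_injective
    refine adjoin_algHom_ext (s := {ζ, θ}) F ?_
    rintro x (rfl | rfl)
    · exact hgζ
    · exact hgθ
  · intro x hx
    have h := eq_one_of_pow_eq_one_of_mem_adjoin hp hp2 hζ hd hd0 (x := ((x : F) : ℂ))
      (hF ▸ (x : F).2) (by exact_mod_cast congrArg (fun y : 𝓞 F ↦ ((y : F) : ℂ)) hx)
    exact RingOfIntegers.ext (Subtype.ext h)
end
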